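/- arXiv:2209.09523 — 2 statements merged into one kernel-verified Lean document; each statement's English description precedes it below -/
import Mathlib

section
/- Let H be a complex separable Hilbert space and let ℒ = {0, M, N, H} be a subspace lattice with two atoms on H. Then the multiplier algebra 𝓜(Alg ℒ ∩ K(H)) of the non-unital Banach algebra Alg ℒ ∩ K(H) is isomorphic as a complex algebra to Alg ℒ. -/
open scoped Topology

/-- A *multiplier* on a complex algebra `A`: a pair `(L, R)` of linear maps with
`L(ab) = L(a)b`, `R(ab) = aR(b)` and `aL(b) = R(a)b`. -/
structure Multiplier (A : Type*) [NonUnitalNonAssocRing A] [Module ℂ A] where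
  L : A →ₗ[ℂ] A
  R : A →ₗ[ℂ] A
  L_mul : ∀ a b : A, L (a * b) = L a * b
  R_mul : ∀ a b : A, R (a * b) = a * R b
  compat : ∀ a b : A, a * L b = R a * b

namespace Multiplier

variable {A : Type*} [NonUnitalRing A] [Module ℂ A] [IsScalarTower ℂ A A]
  [SMulCommClass ℂ A A]

instance : Add (Multiplier A) :=
  ⟨fun u v =>
    ⟨u.L + v.L, u.R + v.R,
      fun a b => by simp [u.L_mul, v.L_mul, add_mul],
      fun a b => by simp [u.R_mul, v.R_mul, mul_add],
      fun a b => by simp [mul_add, add_mul, u.compat, v.compat]⟩⟩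

/-- Multiplication of multipliers: `(L₁, R₁)(L₂, R₂) = (L₁ ∘ L₂, R₂ ∘ R₁)`. -/
instance : Mul (Multiplier A) :=
  ⟨fun u v =>
    ⟨u.L ∘ₗ v.L, v.R ∘ₗ u.R,
      fun a b => by simp [v.L_mul, u.L_mul],
      fun a b => by simp [u.R_mul, v.R_mul],
      fun a b => by simp [u.compat, v.compat]⟩⟩

instance : SMul ℂ (Multiplier A) :=
  ⟨fun c u =>
    ⟨c • u.L, c • u.R,
      fun a b => by simp [u.L_mul, smul_mul_assoc],
      fun a b => by simp [u.R_mul, mul_smul_comm],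
      fun a b => by
        simp only [LinearMap.smul_apply]
        rw [mul_smul_comm, u.compat, smul_mul_assoc]⟩⟩

end Multiplier

namespace TwoAtoms

set_option linter.unusedSectionVars false

open InnerProductSpace

variable {H : Type*} [NormedAddCommGroup H] [InnerProductSpace ℂ H] [CompleteSpace H]

/-- The rank one operator `z ↦ ⟪f, z⟫ m`. -/
noncomputable def op (m f : H) : H →L[ℂ] H := (innerSL ℂ f).smulRight m

lemma op_apply (m f z : H) : op m f z = (inner ℂ f z) • m := by simp [op]

lemma op_compact (m f : H) : IsCompactOperator (op m f) := by
  have h0 : IsCompactOperator (id : ℂ → ℂ) := isCompactOperator_id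
  have h : IsCompactOperator (innerSL ℂ f) := h0.comp_clm (innerSL ℂ f)
  exact h.clm_comp ((ContinuousLinearMap.id ℂ ℂ).smulRight m)

lemma op_norm (m f : H) : ‖op m f‖ = ‖f‖ * ‖m‖ := by
  simp [op, ContinuousLinearMap.norm_smulRight_apply]

lemma inner_left_zero {N : Submodule ℂ H} {f x : H} (hf : f ∈ Nᗮ) (hx : x ∈ N) :
    inner ℂ f x = 0 := Submodule.inner_left_of_mem_orthogonal hx hf

lemma op_mem {M N : Submodule ℂ H} {A0 : NonUnitalSubalgebra ℂ (H →L[ℂ] H)}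
    (hA : ∀ T : H →L[ℂ] H, T ∈ A0 ↔
      ((∀ x ∈ M, T x ∈ M) ∧ (∀ x ∈ N, T x ∈ N)) ∧ IsCompactOperator ⇑T)
    {m f : H} (hm : m ∈ M) (hf : f ∈ Nᗮ) : op m f ∈ A0 := by
  rw [hA]
  refine ⟨⟨fun x _ => ?_, fun x hx => ?_⟩, op_compact m f⟩
  · rw [op_apply]; exact M.smul_mem _ hm
  · rw [op_apply, inner_left_zero hf hx, zero_smul]; exact N.zero_mem

lemma exists_f {M N : Submodule ℂ H} (hNc : IsClosed (N : Set H))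
    (hspan : (M ⊔ N).topologicalClosure = ⊤) (hN : N ≠ ⊤) :
    ∃ f ∈ Nᗮ, ∃ y ∈ M, inner ℂ f y = 1 := by
  have : CompleteSpace N := hNc.completeSpace_coe
  have h1 : Nᗮ ≠ ⊥ := fun h => hN (Submodule.orthogonal_eq_bot_iff.1 h)
  obtain ⟨f, hf, hf0⟩ := (Submodule.ne_bot_iff _).1 h1
  refine ⟨f, hf, ?_⟩
  by_contra! hcon
  have hz : ∀ y ∈ M, inner ℂ f y = 0 := by
    intro y hy
    by_contra hne
    apply hcon ((inner ℂ f y)⁻¹ • y) (M.smul_mem _ hy)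
    rw [inner_smul_right, inv_mul_cancel₀ hne]
  have hfM : f ∈ Mᗮ := (Submodule.mem_orthogonal' _ _).2 hz
  have : f ∈ (M ⊔ N)ᗮ := by
    rw [← Submodule.inf_orthogonal]; exact ⟨hfM, hf⟩
  rw [← Submodule.orthogonal_closure, hspan, Submodule.top_orthogonal_eq_bot] at this
  exact hf0 (by simpa using this)

lemma bot_of_top {M N : Submodule ℂ H} (hMN : M ⊓ N = ⊥) (hN : N = ⊤) : M = ⊥ := by
  rw [hN, inf_top_eq] at hMN; exact hMN

lemma dense_ext {M N : Submodule ℂ H} (hspan : (M ⊔ N).topologicalClosure = ⊤)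
    {T U : H →L[ℂ] H} (h1 : ∀ x ∈ M, T x = U x) (h2 : ∀ x ∈ N, T x = U x) : T = U := by
  have hd : Dense ((M ⊔ N : Submodule ℂ H) : Set H) := by
    rw [← Submodule.dense_iff_topologicalClosure_eq_top] at hspan; exact hspan
  apply ContinuousLinearMap.ext
  intro x
  refine congrFun (Continuous.ext_on hd T.continuous U.continuous ?_) x
  intro x hx
  obtain ⟨m, hm, n, hn, rfl⟩ := Submodule.mem_sup.1 hx
  rw [map_add, map_add, h1 m hm, h2 n hn]

/-- left faithfulness on one atom -/
lemma kill_M {M N : Submodule ℂ H} (hNc : IsClosed (N : Set H))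
    (hMN : M ⊓ N = ⊥) (hspan : (M ⊔ N).topologicalClosure = ⊤)
    {A0 : NonUnitalSubalgebra ℂ (H →L[ℂ] H)}
    (hA : ∀ T : H →L[ℂ] H, T ∈ A0 ↔
      ((∀ x ∈ M, T x ∈ M) ∧ (∀ x ∈ N, T x ∈ N)) ∧ IsCompactOperator ⇑T)
    {c d : H →L[ℂ] H} (hc : ∀ b ∈ A0, c * b = d * b) : ∀ x ∈ M, c x = d x := by
  intro x hx
  by_cases hN : N = ⊤
  · rw [bot_of_top hMN hN] at hx
    rw [(Submodule.mem_bot ℂ).1 hx, map_zero, map_zero]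
  · obtain ⟨f, hf, y, hy, hfy⟩ := exists_f hNc hspan hN
    have := congrArg (fun T : H →L[ℂ] H => T y) (hc _ (op_mem hA hx hf))
    simpa [op_apply, hfy] using this

lemma swap {M N : Submodule ℂ H} {A0 : NonUnitalSubalgebra ℂ (H →L[ℂ] H)}
    (hA : ∀ T : H →L[ℂ] H, T ∈ A0 ↔
      ((∀ x ∈ M, T x ∈ M) ∧ (∀ x ∈ N, T x ∈ N)) ∧ IsCompactOperator ⇑T) :
    ∀ T : H →L[ℂ] H, T ∈ A0 ↔
      ((∀ x ∈ N, T x ∈ N) ∧ (∀ x ∈ M, T x ∈ M)) ∧ IsCompactOperator ⇑T := by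
  intro T; rw [hA]; tauto

lemma faithful {M N : Submodule ℂ H} (hMc : IsClosed (M : Set H)) (hNc : IsClosed (N : Set H))
    (hMN : M ⊓ N = ⊥) (hspan : (M ⊔ N).topologicalClosure = ⊤)
    {A0 : NonUnitalSubalgebra ℂ (H →L[ℂ] H)}
    (hA : ∀ T : H →L[ℂ] H, T ∈ A0 ↔
      ((∀ x ∈ M, T x ∈ M) ∧ (∀ x ∈ N, T x ∈ N)) ∧ IsCompactOperator ⇑T)
    {c d : H →L[ℂ] H} (hc : ∀ b ∈ A0, c * b = d * b) : c = d :=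
  dense_ext hspan (kill_M hNc hMN hspan hA hc)
    (kill_M hMc (inf_comm M N ▸ hMN) (sup_comm M N ▸ hspan) (swap hA) hc)

lemma kill_right {M N : Submodule ℂ H} (hNc : IsClosed (N : Set H))
    (hspan : (M ⊔ N).topologicalClosure = ⊤)
    {A0 : NonUnitalSubalgebra ℂ (H →L[ℂ] H)}
    (hA : ∀ T : H →L[ℂ] H, T ∈ A0 ↔
      ((∀ x ∈ M, T x ∈ M) ∧ (∀ x ∈ N, T x ∈ N)) ∧ IsCompactOperator ⇑T)
    {c : H →L[ℂ] H} (hc : ∀ b ∈ A0, b * c = 0) (x : H) : c x ∈ N := by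
  have : CompleteSpace N := hNc.completeSpace_coe
  by_cases hM : M = ⊥
  · rw [hM, bot_sup_eq, hNc.submodule_topologicalClosure_eq] at hspan
    rw [hspan]; trivial
  · obtain ⟨m, hm, hm0⟩ := (Submodule.ne_bot_iff _).1 hM
    rw [← Submodule.orthogonal_orthogonal N, Submodule.mem_orthogonal]
    intro f hf
    have := congrArg (fun T : H →L[ℂ] H => T x) (hc _ (op_mem hA hm hf))
    simpa [op_apply, hm0] using this

lemma faithful_right {M N : Submodule ℂ H} (hMc : IsClosed (M : Set H))
    (hNc : IsClosed (N : Set H))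
    (hMN : M ⊓ N = ⊥) (hspan : (M ⊔ N).topologicalClosure = ⊤)
    {A0 : NonUnitalSubalgebra ℂ (H →L[ℂ] H)}
    (hA : ∀ T : H →L[ℂ] H, T ∈ A0 ↔
      ((∀ x ∈ M, T x ∈ M) ∧ (∀ x ∈ N, T x ∈ N)) ∧ IsCompactOperator ⇑T)
    {c : H →L[ℂ] H} (hc : ∀ b ∈ A0, b * c = 0) : c = 0 := by
  ext x
  have h : c x ∈ M ⊓ N := ⟨kill_right hMc (sup_comm M N ▸ hspan) (swap hA) hc x,
    kill_right hNc hspan hA hc x⟩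
  rw [hMN] at h
  simpa using h

lemma isClosed_A {M N : Submodule ℂ H} (hMc : IsClosed (M : Set H))
    (hNc : IsClosed (N : Set H))
    {A0 : NonUnitalSubalgebra ℂ (H →L[ℂ] H)}
    (hA : ∀ T : H →L[ℂ] H, T ∈ A0 ↔
      ((∀ x ∈ M, T x ∈ M) ∧ (∀ x ∈ N, T x ∈ N)) ∧ IsCompactOperator ⇑T) :
    IsClosed (A0 : Set (H →L[ℂ] H)) := by
  have key : ∀ P : Submodule ℂ H, IsClosed (P : Set H) →
      IsClosed {T : H →L[ℂ] H | ∀ x ∈ P, T x ∈ P} := by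
    intro P hP
    simp only [Set.ofPred_forall]
    refine isClosed_iInter fun x => isClosed_iInter fun _ => ?_
    exact hP.preimage (ContinuousLinearMap.apply ℂ H x).continuous
  have : (A0 : Set (H →L[ℂ] H)) = ({T : H →L[ℂ] H | ∀ x ∈ M, T x ∈ M} ∩
      {T : H →L[ℂ] H | ∀ x ∈ N, T x ∈ N}) ∩ {T : H →L[ℂ] H | IsCompactOperator ⇑T} := by
    ext T; exact hA T
  rw [this]
  exact ((key M hMc).inter (key N hNc)).inter isClosed_setOfPred_isCompactOperator

lemma L_bdd {M N : Submodule ℂ H} (hMc : IsClosed (M : Set H))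
    (hNc : IsClosed (N : Set H))
    (hMN : M ⊓ N = ⊥) (hspan : (M ⊔ N).topologicalClosure = ⊤)
    {A0 : NonUnitalSubalgebra ℂ (H →L[ℂ] H)}
    (hA : ∀ T : H →L[ℂ] H, T ∈ A0 ↔
      ((∀ x ∈ M, T x ∈ M) ∧ (∀ x ∈ N, T x ∈ N)) ∧ IsCompactOperator ⇑T)
    (u : Multiplier A0) : ∃ C : ℝ, 0 ≤ C ∧ ∀ a : A0, ‖(u.L a).1‖ ≤ C * ‖a.1‖ := by
  have hcs : CompleteSpace A0.toSubmodule := (isClosed_A hMc hNc hA).completeSpace_coe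
  let L' : A0.toSubmodule →ₗ[ℂ] A0.toSubmodule :=
    { toFun := fun a => u.L a
      map_add' := fun a b => u.L.map_add a b
      map_smul' := fun c a => u.L.map_smul c a }
  have hcont : Continuous L' := by
    refine LinearMap.continuous_of_seq_closed_graph L' ?_
    intro v x y hv hLv
    have hv' : Filter.Tendsto (fun k => (v k).1) Filter.atTop (𝓝 x.1) :=
      (continuous_subtype_val.tendsto x).comp hv
    have hLv' : Filter.Tendsto (fun k => (L' (v k)).1) Filter.atTop (𝓝 y.1) :=
      (continuous_subtype_val.tendsto y).comp hLv
    have h0 : y.1 - (L' x).1 = 0 := by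
      refine faithful_right hMc hNc hMN hspan hA ?_
      intro b hb
      have hcomp : ∀ a : A0.toSubmodule, b * (L' a).1 = (u.R ⟨b, hb⟩).1 * a.1 := fun a =>
        congrArg Subtype.val (u.compat ⟨b, hb⟩ a)
      have e1 : Filter.Tendsto (fun k => b * (L' (v k)).1) Filter.atTop
          (𝓝 (b * y.1)) := hLv'.const_mul _
      have e2 : Filter.Tendsto (fun k => b * (L' (v k)).1) Filter.atTop
          (𝓝 (b * (L' x).1)) := by
        simp only [hcomp]
        exact hv'.const_mul _
      rw [mul_sub, tendsto_nhds_unique e1 e2, sub_self]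
    exact Subtype.ext (sub_eq_zero.1 h0)
  let Lc : A0.toSubmodule →L[ℂ] A0.toSubmodule := ⟨L', hcont⟩
  exact ⟨‖Lc‖, Lc.opNorm_nonneg, fun a => Lc.le_opNorm a⟩

lemma exists_t {M N : Submodule ℂ H}
    (hNc : IsClosed (N : Set H))
    (hMN : M ⊓ N = ⊥) (hspan : (M ⊔ N).topologicalClosure = ⊤)
    {A0 : NonUnitalSubalgebra ℂ (H →L[ℂ] H)}
    (hA : ∀ T : H →L[ℂ] H, T ∈ A0 ↔
      ((∀ x ∈ M, T x ∈ M) ∧ (∀ x ∈ N, T x ∈ N)) ∧ IsCompactOperator ⇑T)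
    (u : Multiplier A0) {C : ℝ} (hC : 0 ≤ C) (hL : ∀ a : A0, ‖(u.L a).1‖ ≤ C * ‖a.1‖) :
    ∃ t : M →ₗ[ℂ] H, ∃ K : ℝ, 0 ≤ K ∧ (∀ m, t m ∈ M) ∧ (∀ m : M, ‖t m‖ ≤ K * ‖(m : H)‖) ∧
      ∀ (a : A0) (m : M) (h : a.1 m ∈ M), (u.L a).1 m = t ⟨a.1 m, h⟩ := by
  by_cases hN : N = ⊤
  · have hM := bot_of_top hMN hN
    refine ⟨0, 0, le_rfl, fun m => by simp, fun m => by simp, fun a m h => ?_⟩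
    have : (m : H) = 0 := (Submodule.mem_bot ℂ).1 (hM.le m.2)
    simp [this]
  · obtain ⟨f, hf, y, hy, hfy⟩ := exists_f hNc hspan hN
    let t : M →ₗ[ℂ] H :=
      { toFun := fun m => (u.L ⟨op m f, op_mem hA m.2 hf⟩).1 y
        map_add' := by
          intro m m'
          have : (⟨op (m + m' : M) f, op_mem hA (m + m').2 hf⟩ : A0) =
              ⟨op m f, op_mem hA m.2 hf⟩ + ⟨op m' f, op_mem hA m'.2 hf⟩ := by
            apply Subtype.ext
            ext z
            simp [op_apply]
          rw [this, map_add]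
          rfl
        map_smul' := by
          intro c m
          have : (⟨op (c • m : M) f, op_mem hA (c • m).2 hf⟩ : A0) =
              c • ⟨op m f, op_mem hA m.2 hf⟩ := by
            apply Subtype.ext
            ext z
            simp [op_apply, smul_comm c]
          rw [this, map_smul]
          rfl }
    refine ⟨t, C * ‖f‖ * ‖y‖, by positivity, fun m => ?_, fun m => ?_, fun a m h => ?_⟩
    · exact ((hA _).1 (u.L ⟨op m f, op_mem hA m.2 hf⟩).2).1.1 y hy
    · calc ‖t m‖ ≤ ‖(u.L ⟨op m f, op_mem hA m.2 hf⟩).1‖ * ‖y‖ := ContinuousLinearMap.le_opNorm _ _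
        _ ≤ (C * ‖op (m : H) f‖) * ‖y‖ := by gcongr; exact hL _
        _ = _ := by rw [op_norm]; ring
    · have e : (⟨op (a.1 m) f, op_mem hA h hf⟩ : A0) = a * ⟨op m f, op_mem hA m.2 hf⟩ := by
        apply Subtype.ext
        ext z
        simp [op_apply]
      change _ = (u.L ⟨op (a.1 m) f, op_mem hA h hf⟩).1 y
      rw [e, u.L_mul]
      simp [op_apply, hfy]

/-- The geometric heart: density of `P_M (Nᗮ)` in `M`. -/
lemma approx {M N : Submodule ℂ H} [M.HasOrthogonalProjection] (hNc : IsClosed (N : Set H))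
    (hMN : M ⊓ N = ⊥) {m : H} (hm : m ∈ M) {ε : ℝ} (hε : 0 < ε) :
    ∃ f ∈ Nᗮ, ‖M.starProjection f - m‖ < ε := by
  have : CompleteSpace N := hNc.completeSpace_coe
  let P : H →ₗ[ℂ] H := M.starProjection.toLinearMap
  have hmem : m ∈ (Nᗮ.map P).topologicalClosure := by
    rw [← Submodule.orthogonal_orthogonal_eq_closure, Submodule.mem_orthogonal]
    intro v hv
    have h1 : M.starProjection v ∈ N := by
      rw [← Submodule.orthogonal_orthogonal N, Submodule.mem_orthogonal']
      intro f hf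
      rw [Submodule.inner_starProjection_left_eq_right]
      exact Submodule.inner_left_of_mem_orthogonal (Submodule.mem_map_of_mem (f := P) hf) hv
    have h2 : M.starProjection v ∈ M ⊓ N := ⟨Submodule.starProjection_apply_mem M v, h1⟩
    rw [hMN, Submodule.mem_bot] at h2
    rw [← Submodule.starProjection_eq_self_iff.2 hm,
      ← Submodule.inner_starProjection_left_eq_right, h2, inner_zero_left]
  have h3 : m ∈ closure ((Nᗮ.map P : Submodule ℂ H) : Set H) := hmem
  obtain ⟨b, hb, hd⟩ := Metric.mem_closure_iff.1 h3 ε hε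
  obtain ⟨f, hf, rfl⟩ := hb
  refine ⟨f, hf, ?_⟩
  rw [dist_comm, dist_eq_norm] at hd
  exact hd

lemma factor {M N : Submodule ℂ H} (hMc : IsClosed (M : Set H)) (hNc : IsClosed (N : Set H))
    (hMN : M ⊓ N = ⊥) {m n : H} (hm : m ∈ M) (hm0 : m ≠ 0)
    (hbig : 6 * ‖m + n‖ ≤ ‖m‖) (hn : n ∈ N) :
    ∃ f ∈ Nᗮ, ∃ g ∈ Mᗮ, g ≠ 0 ∧ inner ℂ f g = inner ℂ g g ∧
      ‖op m f + op n g‖ ≤ 7 * ‖m + n‖ * ‖g‖ := by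
  have : CompleteSpace M := hMc.completeSpace_coe
  have hmpos : 0 < ‖m‖ := norm_pos_iff.2 hm0
  obtain ⟨f, hf, hfm⟩ := approx hNc hMN hm (half_pos hmpos)
  set p := M.starProjection f with hp
  have hpM : p ∈ M := Submodule.starProjection_apply_mem M f
  have hg : f - p ∈ Mᗮ := Submodule.sub_starProjection_mem_orthogonal f
  have h1 : ‖p‖ ≤ 3 / 2 * ‖m‖ := by
    have := norm_add_le (p - m) m
    rw [sub_add_cancel] at this
    linarith
  have h2 : inner ℂ f (m + n) = inner ℂ p m := by
    rw [inner_add_right, inner_left_zero hf hn, add_zero]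
    have : inner ℂ (f - p) m = 0 := inner_left_zero hg hm
    rw [inner_sub_left, sub_eq_zero] at this
    exact this
  have h3 : ‖m‖ ^ 2 / 2 ≤ ‖m + n‖ * ‖f‖ := by
    have e1 : ‖inner ℂ p m‖ ≤ ‖f‖ * ‖m + n‖ := by rw [← h2]; exact norm_inner_le_norm _ _
    have e2 : inner ℂ m m = inner ℂ p m - inner ℂ (p - m) m := by rw [inner_sub_left]; ring
    have e3 : ‖(inner ℂ m m : ℂ)‖ = ‖m‖ ^ 2 := by
      rw [inner_self_eq_norm_sq_to_K]; simp
    have e4 : ‖inner ℂ (p - m) m‖ ≤ ‖m‖ / 2 * ‖m‖ :=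
      (norm_inner_le_norm _ _).trans (by gcongr)
    have e5 := norm_sub_le (inner ℂ p m) (inner ℂ (p - m) m)
    rw [← e2, e3] at e5
    nlinarith
  have h4 : ‖m‖ * ‖p‖ ≤ 3 * ‖m + n‖ * ‖f‖ := by nlinarith
  have h5 : ‖p‖ ≤ ‖f‖ / 2 := by
    have : ‖m‖ * ‖p‖ ≤ ‖m‖ * (‖f‖ / 2) := by nlinarith [norm_nonneg f]
    exact le_of_mul_le_mul_left this hmpos
  have h6 : ‖f‖ / 2 ≤ ‖f - p‖ := by
    have := norm_sub_norm_le f p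
    linarith
  have hfpos : 0 < ‖f‖ := by
    rcases (norm_nonneg f).lt_or_eq with h | h
    · exact h
    · rw [← h] at h3; nlinarith
  refine ⟨f, hf, f - p, hg, ?_, ?_, ?_⟩
  · rw [← norm_pos_iff]; linarith
  · rw [← sub_eq_zero, ← inner_sub_left, sub_sub_cancel]
    exact Submodule.inner_right_of_mem_orthogonal hpM hg
  · have e : op m f + op n (f - p) = op (m + n) (f - p) + op m p := by
      ext z
      simp only [add_apply, op_apply, inner_sub_left, smul_add, sub_smul]
      abel
    rw [e]
    calc _ ≤ ‖op (m + n) (f - p)‖ + ‖op m p‖ := norm_add_le _ _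
      _ = ‖f - p‖ * ‖m + n‖ + ‖p‖ * ‖m‖ := by rw [op_norm, op_norm]
      _ ≤ _ := by nlinarith [norm_nonneg (m + n)]

lemma exists_T {M N : Submodule ℂ H} (hMc : IsClosed (M : Set H)) (hNc : IsClosed (N : Set H))
    (hMN : M ⊓ N = ⊥) (hspan : (M ⊔ N).topologicalClosure = ⊤)
    {A0 : NonUnitalSubalgebra ℂ (H →L[ℂ] H)}
    (hA : ∀ T : H →L[ℂ] H, T ∈ A0 ↔
      ((∀ x ∈ M, T x ∈ M) ∧ (∀ x ∈ N, T x ∈ N)) ∧ IsCompactOperator ⇑T)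
    (u : Multiplier A0) :
    ∃ T : H →L[ℂ] H, ((∀ x ∈ M, T x ∈ M) ∧ (∀ x ∈ N, T x ∈ N)) ∧
      (∀ a : A0, (u.L a).1 = T * a.1) ∧ (∀ a : A0, (u.R a).1 = a.1 * T) := by
  obtain ⟨C, hC, hL⟩ := L_bdd hMc hNc hMN hspan hA u
  obtain ⟨t, K, hK, htM, htK, ht⟩ := exists_t hNc hMN hspan hA u hC hL
  obtain ⟨s, K', hK', hsN, hsK, hs⟩ := exists_t hMc (inf_comm M N ▸ hMN)
    (sup_comm M N ▸ hspan) (swap hA) u hC hL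
  have hop : ∀ (m : M) (f : H) (hf : f ∈ Nᗮ),
      (u.L ⟨op m f, op_mem hA m.2 hf⟩).1 = op (t m) f := by
    intro m f hf
    have haa := ((hA _).1 (op_mem hA m.2 hf)).1
    refine dense_ext hspan (fun x hx => ?_) (fun x hx => ?_)
    · refine (ht _ ⟨x, hx⟩ (haa.1 x hx)).trans ?_
      rw [op_apply (t m), ← map_smul]
      congr 1
    · refine (hs _ ⟨x, hx⟩ (haa.2 x hx)).trans ?_
      rw [op_apply (t m), inner_left_zero hf hx, zero_smul, ← map_zero s]
      congr 1
      apply Subtype.ext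
      change op (m : H) f x = 0
      rw [op_apply, inner_left_zero hf hx, zero_smul]
  have hop' : ∀ (n : N) (g : H) (hg : g ∈ Mᗮ),
      (u.L ⟨op n g, op_mem (swap hA) n.2 hg⟩).1 = op (s n) g := by
    intro n g hg
    have haa := ((hA _).1 (op_mem (swap hA) n.2 hg)).1
    refine dense_ext hspan (fun x hx => ?_) (fun x hx => ?_)
    · refine (ht _ ⟨x, hx⟩ (haa.1 x hx)).trans ?_
      rw [op_apply (s n), inner_left_zero hg hx, zero_smul, ← map_zero t]
      congr 1
      apply Subtype.ext
      change op (n : H) g x = 0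
      rw [op_apply, inner_left_zero hg hx, zero_smul]
    · refine (hs _ ⟨x, hx⟩ (haa.2 x hx)).trans ?_
      rw [op_apply (s n), ← map_smul]
      congr 1
  let T0 : M × N →ₗ[ℂ] H := t.coprod s
  let j : M × N →ₗ[ℂ] H := M.subtype.coprod N.subtype
  have hd : DenseRange j := by
    have hd : Dense ((M ⊔ N : Submodule ℂ H) : Set H) := by
      rw [← Submodule.dense_iff_topologicalClosure_eq_top] at hspan; exact hspan
    refine hd.mono ?_
    intro x hx
    obtain ⟨m, hm, n, hn, rfl⟩ := Submodule.mem_sup.1 hx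
    exact ⟨(⟨m, hm⟩, ⟨n, hn⟩), by simp [j]⟩
  have hb : ∃ B, ∀ x, ‖T0 x‖ ≤ B * ‖j x‖ := by
    refine ⟨7 * C + 6 * K + 7 * K', ?_⟩
    rintro ⟨m, n⟩
    have hT0 : T0 (m, n) = t m + s n := by simp [T0]
    have hj : j (m, n) = (m : H) + n := by simp [j]
    rw [hT0, hj]
    set x : H := (m : H) + n with hx
    by_cases hbig : 6 * ‖x‖ ≤ ‖(m : H)‖ ∧ (m : H) ≠ 0
    · obtain ⟨f, hf, g, hg, hg0, hfg, hnorm⟩ :=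
        factor hMc hNc hMN m.2 hbig.2 hbig.1 n.2
      have hgpos : 0 < ‖g‖ := norm_pos_iff.2 hg0
      let a : A0 := ⟨op m f, op_mem hA m.2 hf⟩ + ⟨op n g, op_mem (swap hA) n.2 hg⟩
      have hLg : (u.L a).1 g = (inner ℂ g g : ℂ) • (t m + s n) := by
        change (u.L (_ + _)).1 g = _
        rw [map_add]
        change (u.L _).1 g + (u.L _).1 g = _
        rw [hop m f hf, hop' n g hg, op_apply, op_apply, hfg, smul_add]
      have h1 : ‖(u.L a).1 g‖ ≤ C * (7 * ‖x‖ * ‖g‖) * ‖g‖ :=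
        ((u.L a).1.le_opNorm g).trans (by
          gcongr
          exact (hL a).trans (by gcongr; exact hnorm))
      rw [hLg, norm_smul, inner_self_eq_norm_sq_to_K] at h1
      have h2 : ‖g‖ ^ 2 * ‖t m + s n‖ ≤ ‖g‖ ^ 2 * (7 * C * ‖x‖) := by
        simp at h1
        linarith
      have h3 := le_of_mul_le_mul_left h2 (by positivity)
      have : 0 ≤ (6 * K + 7 * K') * ‖x‖ := by positivity
      linarith
    · have hm6 : ‖(m : H)‖ ≤ 6 * ‖x‖ := by
        by_cases h0 : (m : H) = 0
        · rw [h0, norm_zero]; positivity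
        · have := fun h => hbig ⟨h, h0⟩
          linarith [not_le.1 this]
      have hn7 : ‖(n : H)‖ ≤ 7 * ‖x‖ := by
        have e : (n : H) = x - m := by rw [hx]; abel
        have := norm_sub_le x (m : H)
        rw [e]; linarith
      calc ‖t m + s n‖ ≤ ‖t m‖ + ‖s n‖ := norm_add_le _ _
        _ ≤ K * ‖(m : H)‖ + K' * ‖(n : H)‖ := add_le_add (htK m) (hsK n)
        _ ≤ K * (6 * ‖x‖) + K' * (7 * ‖x‖) := by gcongr
        _ ≤ _ := by nlinarith [mul_nonneg hC (norm_nonneg x)]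
  let T : H →L[ℂ] H := T0.extendOfNorm j
  have hT : ∀ p, T (j p) = T0 p := LinearMap.extendOfNorm_eq hd hb
  have hTM : ∀ m : M, T m = t m := fun m => by simpa [j, T0] using hT (m, 0)
  have hTN : ∀ n : N, T n = s n := fun n => by simpa [j, T0] using hT (0, n)
  have hLT : ∀ a : A0, (u.L a).1 = T * a.1 := by
    intro a
    have haa := ((hA _).1 a.2).1
    refine dense_ext hspan (fun x hx => ?_) (fun x hx => ?_)
    · exact (ht a ⟨x, hx⟩ (haa.1 x hx)).trans (hTM ⟨a.1 x, haa.1 x hx⟩).symm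
    · exact (hs a ⟨x, hx⟩ (haa.2 x hx)).trans (hTN ⟨a.1 x, haa.2 x hx⟩).symm
  refine ⟨T, ⟨fun x hx => ?_, fun x hx => ?_⟩, hLT, fun a => ?_⟩
  · rw [hTM ⟨x, hx⟩]; exact htM _
  · rw [hTN ⟨x, hx⟩]; exact hsN _
  · refine faithful hMc hNc hMN hspan hA fun b hb' => ?_
    have := congrArg Subtype.val (u.compat a ⟨b, hb'⟩)
    simp only [MulMemClass.coe_mul, hLT] at this
    rw [← this, mul_assoc]

end TwoAtoms

set_option synthInstance.maxHeartbeats 1000000 in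
/-- Let `H` be a complex separable Hilbert space and `ℒ = {0, M, N, H}` a subspace
lattice with two atoms on `H`.  Then the multiplier algebra `𝓜(Alg ℒ ∩ K(H))` of the
non-unital Banach algebra `Alg ℒ ∩ K(H)` is isomorphic as a complex algebra to
`Alg ℒ`.  Here `S` realizes `Alg ℒ` and `A0` realizes `Alg ℒ ∩ K(H)`. -/
theorem multiplier_algebra_iso_two_atoms (H : Type*)
    [NormedAddCommGroup H] [InnerProductSpace ℂ H] [CompleteSpace H]
    [TopologicalSpace.SeparableSpace H]
    (M N : Submodule ℂ H) (hMc : IsClosed (M : Set H)) (hNc : IsClosed (N : Set H))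
    (hMN : M ⊓ N = ⊥) (hspan : (M ⊔ N).topologicalClosure = ⊤)
    (S : Subalgebra ℂ (H →L[ℂ] H))
    (hS : ∀ T : H →L[ℂ] H, T ∈ S ↔ (∀ x ∈ M, T x ∈ M) ∧ (∀ x ∈ N, T x ∈ N))
    (A0 : NonUnitalSubalgebra ℂ (H →L[ℂ] H))
    (hA0 : ∀ T : H →L[ℂ] H, T ∈ A0 ↔ T ∈ S ∧ IsCompactOperator ⇑T) :
    ∃ e : ↥S ≃ Multiplier ↥A0,
      (∀ x y : ↥S, e (x + y) = e x + e y) ∧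
      (∀ x y : ↥S, e (x * y) = e x * e y) ∧
      (∀ (c : ℂ) (x : ↥S), e (c • x) = c • e x) := by
  have hA : ∀ T : H →L[ℂ] H, T ∈ A0 ↔
      ((∀ x ∈ M, T x ∈ M) ∧ (∀ x ∈ N, T x ∈ N)) ∧ IsCompactOperator ⇑T := by
    intro T; rw [hA0, hS]
  have hl : ∀ (x : S) (a : A0), x.1 * a.1 ∈ A0 := fun x a =>
    (hA0 _).2 ⟨S.mul_mem x.2 ((hA0 _).1 a.2).1, ((hA0 _).1 a.2).2.clm_comp x.1⟩
  have hr : ∀ (x : S) (a : A0), a.1 * x.1 ∈ A0 := fun x a =>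
    (hA0 _).2 ⟨S.mul_mem ((hA0 _).1 a.2).1 x.2, ((hA0 _).1 a.2).2.comp_clm x.1⟩
  have ext' : ∀ u v : Multiplier A0, (∀ a, (u.L a).1 = (v.L a).1) →
      (∀ a, (u.R a).1 = (v.R a).1) → u = v := by
    rintro ⟨L, R, _, _, _⟩ ⟨L', R', _, _, _⟩ h1 h2
    have e1 : L = L' := LinearMap.ext fun a => Subtype.ext (h1 a)
    have e2 : R = R' := LinearMap.ext fun a => Subtype.ext (h2 a)
    subst e1 e2
    rfl
  let φ : S → Multiplier A0 := fun x =>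
    { L :=
        { toFun := fun a => ⟨x.1 * a.1, hl x a⟩
          map_add' := fun a b => Subtype.ext (mul_add x.1 a.1 b.1)
          map_smul' := fun c a => Subtype.ext (mul_smul_comm c x.1 a.1) }
      R :=
        { toFun := fun a => ⟨a.1 * x.1, hr x a⟩
          map_add' := fun a b => Subtype.ext (add_mul a.1 b.1 x.1)
          map_smul' := fun c a => Subtype.ext (smul_mul_assoc c a.1 x.1) }
      L_mul := fun a b => Subtype.ext (mul_assoc x.1 a.1 b.1).symm
      R_mul := fun a b => Subtype.ext (mul_assoc a.1 b.1 x.1)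
      compat := fun a b => Subtype.ext (mul_assoc a.1 x.1 b.1).symm }
  have hφ : Function.Bijective φ := by
    constructor
    · intro x y hxy
      apply Subtype.ext
      refine TwoAtoms.faithful hMc hNc hMN hspan hA fun b hb => ?_
      exact congrArg (fun u : Multiplier A0 => (u.L ⟨b, hb⟩).1) hxy
    · intro u
      obtain ⟨T, hT, h1, h2⟩ := TwoAtoms.exists_T hMc hNc hMN hspan hA u
      exact ⟨⟨T, (hS T).2 hT⟩, ext' _ _ (fun a => (h1 a).symm) (fun a => (h2 a).symm)⟩
  refine ⟨Equiv.ofBijective φ hφ, fun x y => ?_, fun x y => ?_, fun c x => ?_⟩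
  · exact ext' _ _ (fun a => add_mul x.1 y.1 a.1) (fun a => mul_add a.1 x.1 y.1)
  · exact ext' _ _ (fun a => mul_assoc x.1 y.1 a.1) (fun a => (mul_assoc a.1 x.1 y.1).symm)
  · exact ext' _ _ (fun a => smul_mul_assoc c x.1 a.1) (fun a => mul_smul_comm c a.1 x.1)
end

section
/- Let H be a complex separable Hilbert space and let ℒ = {0, M, N, H} be a subspace lattice with two atoms on H. Then for every Banach Alg ℒ-bimodule 𝑀 and every n ∈ ℕ, every bounded local n-cocycle T : (Alg ℒ)ⁿ → 𝑀 is an n-cocycle. -/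
open scoped Topology

/-- A Banach bimodule over a (possibly non-unital) complex Banach algebra `A`:
a Banach space `M` with bounded left and right module actions
(`l a m = a · m`, `r a m = m · a`) satisfying `(a·m)·b = a·(m·b)`. -/
structure BanachBimodule (A : Type*) (M : Type*) [NonUnitalSeminormedRing A]
    [Module ℂ A] [SeminormedAddCommGroup M] [Module ℂ M] where
  l : A →ₗ[ℂ] M →ₗ[ℂ] M
  r : A →ₗ[ℂ] M →ₗ[ℂ] M
  l_mul : ∀ a b m, l (a * b) m = l a (l b m)
  r_mul : ∀ a b m, r (a * b) m = r b (r a m)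
  l_r : ∀ a b m, l a (r b m) = r b (l a m)
  l_bdd : ∃ C : ℝ, ∀ a m, ‖l a m‖ ≤ C * ‖a‖ * ‖m‖
  r_bdd : ∃ C : ℝ, ∀ a m, ‖r a m‖ ≤ C * ‖a‖ * ‖m‖

variable {A M : Type*} [NonUnitalSeminormedRing A] [Module ℂ A]
  [SeminormedAddCommGroup M] [Module ℂ M]

/-- The Hochschild coboundary `δⁿT` of an `n`-linear map `T : Aⁿ → M`:
`δⁿT(a₁,…,a_{n+1}) = a₁·T(a₂,…,a_{n+1})
  + Σ_{j=1}^{n} (−1)ʲ T(a₁,…,a_{j−1}, a_j a_{j+1}, a_{j+2},…,a_{n+1})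
  + (−1)^{n+1} T(a₁,…,a_n)·a_{n+1}`. -/
def cocycleBoundary (B : BanachBimodule A M) {n : ℕ}
    (T : MultilinearMap ℂ (fun _ : Fin n => A) M) : (Fin (n + 1) → A) → M := fun a =>
  B.l (a 0) (T fun i => a i.succ)
    + ∑ j : Fin n, ((-1 : ℤ) ^ ((j : ℕ) + 1)) •
        T (fun i => if (i : ℕ) < (j : ℕ) then a i.castSucc
          else if (i : ℕ) = (j : ℕ) then a i.castSucc * a i.succ else a i.succ)
    + ((-1 : ℤ) ^ (n + 1)) • B.r (a (Fin.last n)) (T fun i => a i.castSucc)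

/-- `T` is a bounded `n`-cocycle: a bounded (continuous) `n`-linear map with
`δⁿT = 0`. -/
def IsBoundedCocycle (B : BanachBimodule A M) {n : ℕ}
    (T : MultilinearMap ℂ (fun _ : Fin n => A) M) : Prop :=
  Continuous T ∧ ∀ a : Fin (n + 1) → A, cocycleBoundary B T a = 0

/-- `T` is a bounded local `n`-cocycle: `T` is bounded and for each tuple `a` there
is a bounded `n`-cocycle `T'` with `T a = T' a`. -/
def IsBoundedLocalCocycle (B : BanachBimodule A M) {n : ℕ}
    (T : MultilinearMap ℂ (fun _ : Fin n => A) M) : Prop :=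
  Continuous T ∧ ∀ a : Fin n → A, ∃ T' : MultilinearMap ℂ (fun _ : Fin n => A) M,
    IsBoundedCocycle B T' ∧ T a = T' a



section PartOne

variable {R X : Type*} [NormedRing R] [NormedAlgebra ℂ R] [NormedAddCommGroup X] [NormedSpace ℂ X]

/-- the contraction tuple -/
def ctr {R : Type*} [Mul R] {n : ℕ} (j : Fin n) (a : Fin (n + 1) → R) : Fin n → R :=
  fun i => if (i : ℕ) < (j : ℕ) then a i.castSucc
          else if (i : ℕ) = (j : ℕ) then a i.castSucc * a i.succ else a i.succ

theorem cb_eq (B : BanachBimodule R X) {n : ℕ}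
    (T : MultilinearMap ℂ (fun _ : Fin n => R) X) (a : Fin (n + 1) → R) :
    cocycleBoundary B T a = B.l (a 0) (T fun i => a i.succ)
    + ∑ j : Fin n, ((-1 : ℤ) ^ ((j : ℕ) + 1)) • T (ctr j a)
    + ((-1 : ℤ) ^ (n + 1)) • B.r (a (Fin.last n)) (T fun i => a i.castSucc) := rfl

theorem ctr_update {n : ℕ} (j : Fin n) (p : Fin (n + 1)) (a : Fin (n + 1) → R) :
    ∃ (i0 : Fin n) (L : R →ₗ[ℂ] R), ∀ x, ctr j (Function.update a p x)
      = Function.update (ctr j a) i0 (L x) := by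
  have hj := j.2
  have hp := p.2
  rcases lt_trichotomy (p : ℕ) (j : ℕ) with h | h | h
  · refine ⟨⟨p, by omega⟩, LinearMap.id, fun x => ?_⟩
    funext i
    simp only [ctr, Function.update_apply, Fin.ext_iff, Fin.val_castSucc, Fin.val_succ,
      LinearMap.id_apply]
    split_ifs <;> first | rfl | omega
  · refine ⟨j, LinearMap.mulRight ℂ (a j.succ), fun x => ?_⟩
    funext i
    simp only [ctr, Function.update_apply, Fin.ext_iff, Fin.val_castSucc, Fin.val_succ,
      LinearMap.mulRight_apply]
    split_ifs with h1 h2 h3 h4 h5 h6 h7 <;> first | rfl | omega | skip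
    have : i = j := Fin.ext (by omega)
    subst this; rfl
  · by_cases h' : (p : ℕ) = j + 1
    · refine ⟨j, LinearMap.mulLeft ℂ (a j.castSucc), fun x => ?_⟩
      funext i
      simp only [ctr, Function.update_apply, Fin.ext_iff, Fin.val_castSucc, Fin.val_succ,
        LinearMap.mulLeft_apply]
      split_ifs with h1 h2 h3 h4 h5 h6 h7 <;> first | rfl | omega | skip
      have : i = j := Fin.ext (by omega)
      subst this; rfl
    · refine ⟨⟨p - 1, by omega⟩, LinearMap.id, fun x => ?_⟩
      funext i
      simp only [ctr, Function.update_apply, Fin.ext_iff, Fin.val_castSucc, Fin.val_succ,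
        LinearMap.id_apply]
      split_ifs <;> first | rfl | omega

theorem cb_lin (B : BanachBimodule R X) {n : ℕ}
    (T : MultilinearMap ℂ (fun _ : Fin n => R) X) (a : Fin (n + 1) → R) (p : Fin (n + 1)) :
    ∃ g : R →ₗ[ℂ] X, ∀ x, cocycleBoundary B T (Function.update a p x) = g x := by
  have h1 : ∃ g : R →ₗ[ℂ] X, ∀ x, B.l (Function.update a p x 0)
      (T fun i => Function.update a p x i.succ) = g x := by
    rcases Fin.eq_zero_or_eq_succ p with rfl | ⟨p', rfl⟩
    · refine ⟨B.l.flip (T fun i => a i.succ), fun x => ?_⟩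
      simp
    · refine ⟨(B.l (a 0)).comp (T.toLinearMap (fun i => a i.succ) p'), fun x => ?_⟩
      have : (fun i : Fin n => Function.update a p'.succ x i.succ)
          = Function.update (fun i => a i.succ) p' x := by
        funext i
        simp [Function.update_apply]
      rw [this, Function.update_of_ne (Fin.succ_ne_zero p').symm]
      simp
  have h2 : ∃ g : R →ₗ[ℂ] X, ∀ x, B.r (Function.update a p x (Fin.last n))
      (T fun i => Function.update a p x i.castSucc) = g x := by
    rcases Fin.eq_castSucc_or_eq_last p with ⟨p', rfl⟩ | rfl
    · refine ⟨(B.r (a (Fin.last n))).comp (T.toLinearMap (fun i => a i.castSucc) p'), fun x => ?_⟩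
      have : (fun i : Fin n => Function.update a p'.castSucc x i.castSucc)
          = Function.update (fun i => a i.castSucc) p' x := by
        funext i
        simp [Function.update_apply]
      rw [this, Function.update_of_ne (Fin.castSucc_lt_last p').ne']
      simp
    · refine ⟨B.r.flip (T fun i => a i.castSucc), fun x => ?_⟩
      have : (fun i : Fin n => Function.update a (Fin.last n) x i.castSucc)
          = (fun i => a i.castSucc) := by
        funext i
        rw [Function.update_of_ne (Fin.castSucc_lt_last i).ne]
      rw [this]; simp
  have h3 : ∀ j : Fin n, ∃ g : R →ₗ[ℂ] X, ∀ x, T (ctr j (Function.update a p x)) = g x := by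
    intro j
    obtain ⟨i0, L, hL⟩ := ctr_update j p a
    exact ⟨(T.toLinearMap (ctr j a) i0).comp L, fun x => by rw [hL]; simp⟩
  obtain ⟨g1, h1⟩ := h1
  obtain ⟨g2, h2⟩ := h2
  choose g3 h3 using h3
  refine ⟨g1 + ∑ j : Fin n, ((-1 : ℤ) ^ ((j : ℕ) + 1)) • g3 j + ((-1 : ℤ) ^ (n + 1)) • g2,
    fun x => ?_⟩
  rw [cb_eq, h1, h2]
  simp only [h3]
  simp

theorem l_cont (B : BanachBimodule R X) : Continuous fun p : R × X => B.l p.1 p.2 := by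
  obtain ⟨C, hC⟩ := B.l_bdd
  exact (LinearMap.mkContinuous₂ B.l C hC).continuous₂

theorem r_cont (B : BanachBimodule R X) : Continuous fun p : R × X => B.r p.1 p.2 := by
  obtain ⟨C, hC⟩ := B.r_bdd
  exact (LinearMap.mkContinuous₂ B.r C hC).continuous₂

theorem cb_cont (B : BanachBimodule R X) {n : ℕ}
    (T : MultilinearMap ℂ (fun _ : Fin n => R) X) (hT : Continuous T) :
    Continuous (cocycleBoundary B T) := by
  have e : cocycleBoundary B T = fun a => _ := funext (cb_eq B T)
  rw [e]
  have hc : ∀ j : Fin n, Continuous (fun a : Fin (n+1) → R => ctr j a) := by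
    intro j
    refine continuous_pi fun i => ?_
    simp only [ctr]
    split_ifs <;> fun_prop
  refine (Continuous.add ?_ ?_).add ?_
  · have h : Continuous fun a : Fin (n+1) → R => (fun i : Fin n => a i.succ) := by fun_prop
    exact (l_cont B).comp ((continuous_apply 0).prodMk (hT.comp h))
  · refine continuous_finsetSum _ fun j _ => ?_
    have h : Continuous fun a => T (ctr j a) := hT.comp (hc j)
    exact h.const_smul ((-1 : ℤ) ^ ((j : ℕ) + 1))
  · have h : Continuous fun a : Fin (n+1) → R => (fun i : Fin n => a i.castSucc) := by fun_prop
    have h2 : Continuous fun a : Fin (n+1) → R => B.r (a (Fin.last n)) (T fun i => a i.castSucc) :=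
      (r_cont B).comp ((continuous_apply _).prodMk (hT.comp h))
    exact h2.const_smul ((-1 : ℤ) ^ (n + 1))

/-- boundary of a normalized map is normalized -/
theorem cb_norm (B : BanachBimodule R X) (hl : ∀ x, B.l 1 x = x) (hr : ∀ x, B.r 1 x = x) {n : ℕ}
    (T : MultilinearMap ℂ (fun _ : Fin n => R) X)
    (hT : ∀ a : Fin n → R, (∃ i, a i = 1) → T a = 0) (a : Fin (n + 1) → R)
    (p : Fin (n + 1)) (hp : a p = 1) : cocycleBoundary B T a = 0 := by
  have hpl := p.2
  rw [cb_eq]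
  have hctr : ∀ j : Fin n, (j : ℕ) ≠ p → (j : ℕ) + 1 ≠ p → T (ctr j a) = 0 := by
    intro j h1 h2
    apply hT
    have hj := j.2
    by_cases h : (p : ℕ) < j
    · refine ⟨⟨p, by omega⟩, ?_⟩
      simp only [ctr, h, if_true]
      exact hp
    · refine ⟨⟨p - 1, by omega⟩, ?_⟩
      simp only [ctr]
      rw [if_neg (by omega), if_neg (by omega), ← hp]
      congr 1
      apply Fin.ext
      simp
      omega
  have tail : (p : ℕ) ≠ 0 → T (fun i => a i.succ) = 0 := by
    intro h
    apply hT
    refine ⟨⟨p - 1, by omega⟩, ?_⟩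
    rw [← hp]; congr 1; apply Fin.ext; simp; omega
  have init : (p : ℕ) ≠ n → T (fun i => a i.castSucc) = 0 := by
    intro h
    apply hT
    refine ⟨⟨p, by omega⟩, ?_⟩
    rw [← hp]; congr 1
  rcases Nat.eq_zero_or_pos n with hn | hn
  · subst hn
    have : a = fun _ => 1 := by
      funext i
      rw [← hp]; congr 1; exact Fin.ext (by omega)
    subst this
    simp only [hl, hr]
    have : (fun i : Fin 0 => (1 : R)) = Fin.elim0 := Subsingleton.elim _ _
    simp
  by_cases h0 : (p : ℕ) = 0
  · rw [init (by omega), Finset.sum_eq_single (⟨0, hn⟩ : Fin n)]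
    · have hp0 : a 0 = 1 := by rw [← hp]; congr 1; exact Fin.ext (by simp [h0])
      have : ctr (⟨0, hn⟩ : Fin n) a = fun i => a i.succ := by
        funext i
        simp only [ctr]
        split_ifs with h1 h2
        · omega
        · have : i.castSucc = 0 := Fin.ext (by simpa using h2)
          rw [this, hp0, one_mul]
        · rfl
      rw [this, hp0, hl]
      simp
    · intro j _ hj
      rw [hctr j (fun h => hj (Fin.ext (by simp; omega))) (by omega), smul_zero]
    · simp
  rw [tail h0]
  by_cases h1 : (p : ℕ) = n
  · rw [Finset.sum_eq_single (⟨n - 1, by omega⟩ : Fin n)]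
    · have hp0 : a (Fin.last n) = 1 := by rw [← hp]; congr 1; exact Fin.ext (by simp [h1])
      have : ctr (⟨n - 1, by omega⟩ : Fin n) a = fun i => a i.castSucc := by
        funext i
        have := i.2
        simp only [ctr]
        split_ifs with h1 h2
        · rfl
        · have : i.succ = Fin.last n := Fin.ext (by simp; omega)
          rw [this, hp0, mul_one]
        · omega
      rw [this, hp0, hr]
      have : n - 1 + 1 = n := by omega
      simp only [this, pow_succ]
      simp
    · intro j _ hj
      have := j.2
      rw [hctr j (by omega) (fun h => hj (Fin.ext (by simp; omega))), smul_zero]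
    · simp
  rw [init h1]
  have hne : (⟨p - 1, by omega⟩ : Fin n) ≠ ⟨p, by omega⟩ := by
    intro h; rw [Fin.ext_iff] at h; simp at h; omega
  rw [Finset.sum_eq_add_of_mem (⟨p - 1, by omega⟩ : Fin n) ⟨p, by omega⟩ (Finset.mem_univ _)
    (Finset.mem_univ _) hne]
  · have : ctr (⟨p - 1, by omega⟩ : Fin n) a = ctr (⟨p, by omega⟩ : Fin n) a := by
      funext i
      simp only [ctr]
      split_ifs with g1 g2 g3 g4 g5 g6 <;> first | rfl | omega | skip
      · have : i.succ = p := Fin.ext (by simp; omega)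
        rw [this, hp, mul_one]
      · have : i.castSucc = p := Fin.ext (by simp; omega)
        rw [this, hp, one_mul]
    rw [this]
    have : (p : ℕ) - 1 + 1 = p := by omega
    simp only [this, pow_succ]
    simp
  · rintro j _ ⟨h2, h3⟩
    have := j.2
    rw [hctr j (fun h => h3 (Fin.ext (by simp; omega))) (fun h => h2 (Fin.ext (by simp; omega))),
      smul_zero]

theorem cb_base (B : BanachBimodule R X) {n : ℕ} (T : MultilinearMap ℂ (fun _ : Fin n => R) X)
    (a : Fin (n + 1) → R) (c : R) (h : ∀ i : Fin n, a i.castSucc * a i.succ = 0)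
    (hc : a (Fin.last n) * c = 0) :
    B.r c (cocycleBoundary B T a) = B.r c (B.l (a 0) (T fun i => a i.succ)) := by
  rw [cb_eq]
  have : ∀ j : Fin n, T (ctr j a) = 0 := fun j => T.map_coord_zero j (by simp [ctr, h])
  simp only [this, map_add, map_sum, map_zsmul, ← B.r_mul, hc]
  simp

/-- idempotent generation, for a normed algebra -/
def IdemGen (R : Type*) [NormedRing R] [NormedAlgebra ℂ R] : Prop :=
  ∀ J : Subalgebra ℂ R, IsClosed (J : Set R) → (∀ e : R, e * e = e → e ∈ J) → ∀ x, x ∈ J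

theorem zpd (hR : IdemGen R) (φ : R → R → X)
    (h1 : ∀ y, ∃ g : R →ₗ[ℂ] X, ∀ b, φ b y = g b) (h2 : ∀ b, ∃ g : R →ₗ[ℂ] X, ∀ y, φ b y = g y)
    (c1 : ∀ y, Continuous fun b => φ b y) (c2 : ∀ b, Continuous fun y => φ b y)
    (h0 : ∀ b y, b * y = 0 → φ b y = 0) (x : R) : φ x 1 = φ 1 x := by
  have a1 : ∀ y b b', φ (b + b') y = φ b y + φ b' y := fun y b b' => by
    obtain ⟨g, hg⟩ := h1 y; simp [hg]
  have a2 : ∀ b y y', φ b (y + y') = φ b y + φ b y' := fun b y y' => by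
    obtain ⟨g, hg⟩ := h2 b; simp [hg]
  have s1 : ∀ y (c : ℂ) b, φ (c • b) y = c • φ b y := fun y c b => by
    obtain ⟨g, hg⟩ := h1 y; simp [hg]
  have s2 : ∀ b (c : ℂ) y, φ b (c • y) = c • φ b y := fun b c y => by
    obtain ⟨g, hg⟩ := h2 b; simp [hg]
  let J : Subalgebra ℂ R :=
    { carrier := {x | ∀ b y, φ (b * x) y = φ b (x * y)}
      mul_mem' := by
        intro u v hu hv b y
        rw [← mul_assoc, hv, hu, mul_assoc]
      add_mem' := by
        intro u v hu hv b y
        rw [mul_add, a1, hu, hv, add_mul, a2]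
      algebraMap_mem' := by
        intro c b y
        rw [Algebra.algebraMap_eq_smul_one]
        simp [s1, s2] }
  have hJ := hR J ?_ ?_ x
  · have := hJ 1 1
    simpa using this
  · have : (J : Set R) = ⋂ b, ⋂ y, {x | φ (b * x) y = φ b (x * y)} := by
      ext; simp [J]
    rw [this]
    refine isClosed_iInter fun b => isClosed_iInter fun y => isClosed_eq ?_ ?_
    · exact (c1 y).comp (by fun_prop)
    · exact (c2 b).comp (by fun_prop)
  · intro e he b y
    have e1 : φ (b * e) ((1 - e) * y) = 0 := h0 _ _ (by
      have : b * e * ((1 - e) * y) = b * (e - e * e) * y := by noncomm_ring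
      rw [this, he]; simp)
    have e2 : φ (b * (1 - e)) (e * y) = 0 := h0 _ _ (by
      have : b * (1 - e) * (e * y) = b * (e - e * e) * y := by noncomm_ring
      rw [this, he]; simp)
    have f1 : φ (b * e) y = φ (b * e) (e * y) + φ (b * e) ((1 - e) * y) := by
      rw [← a2]; congr 1; noncomm_ring
    have f2 : φ b (e * y) = φ (b * e) (e * y) + φ (b * (1 - e)) (e * y) := by
      rw [← a1]; congr 1; noncomm_ring
    rw [f1, f2, e1, e2]

theorem main_norm (hR : IdemGen R) (B : BanachBimodule R X) (hl : ∀ x, B.l 1 x = x)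
    (hr : ∀ x, B.r 1 x = x) {n : ℕ} (T : MultilinearMap ℂ (fun _ : Fin n => R) X)
    (hcont : Continuous T) (hT : ∀ a : Fin n → R, (∃ i, a i = 1) → T a = 0)
    (hloc : ∀ a : Fin n → R, ∃ T' : MultilinearMap ℂ (fun _ : Fin n => R) X,
      (∀ b, cocycleBoundary B T' b = 0) ∧ T a = T' a) (a : Fin (n + 1) → R) :
    cocycleBoundary B T a = 0 := by
  have claim : ∀ k : ℕ, k ≤ n + 1 → ∀ (a : Fin (n + 1) → R) (c : R),
      (∀ i : Fin n, k ≤ (i : ℕ) → a i.castSucc * a i.succ = 0) →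
      (k ≤ n → a (Fin.last n) * c = 0) → B.r c (cocycleBoundary B T a) = 0 := by
    intro k
    induction k with
    | zero =>
      intro _ a c h hc
      obtain ⟨T', hT', e⟩ := hloc fun i => a i.succ
      rw [cb_base B T a c (fun i => h i (by omega)) (hc (by omega)), e,
        ← cb_base B T' a c (fun i => h i (by omega)) (hc (by omega)), hT', map_zero]
    | succ k ih =>
      intro hk a c h hc
      have ih := ih (by omega)
      have hFc := cb_cont B T hcont
      by_cases hkn : k = n
      · let φ : R → R → X := fun b y =>
          B.r (y * c) (cocycleBoundary B T (Function.update a (Fin.last n) b))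
        have key := zpd hR φ ?_ ?_ ?_ ?_ ?_ (a (Fin.last n))
        · have e1 : φ (a (Fin.last n)) 1 = B.r c (cocycleBoundary B T a) := by
            simp [φ]
          have e2 : φ 1 (a (Fin.last n)) = 0 := by
            simp only [φ]
            rw [cb_norm B hl hr T hT _ (Fin.last n) (by simp), map_zero]
          rw [← e1, key, e2]
        · intro y
          obtain ⟨g, hg⟩ := cb_lin B T a (Fin.last n)
          exact ⟨(B.r (y * c)).comp g, fun b => by simp [φ, hg]⟩
        · intro b
          exact ⟨(B.r.flip (cocycleBoundary B T (Function.update a (Fin.last n) b))).comp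
            (LinearMap.mulRight ℂ c), fun y => by simp [φ]⟩
        · intro y
          exact (r_cont B).comp (continuous_const.prodMk
            (hFc.comp (continuous_const.update _ continuous_id)))
        · intro b
          exact (r_cont B).comp ((continuous_id.mul continuous_const).prodMk continuous_const)
        · intro b y hby
          apply ih
          · intro i hi
            have := i.2
            omega
          · intro _
            rw [Function.update_self, ← mul_assoc, hby, zero_mul]
      · have hkn' : k < n := by omega
        set p : Fin (n + 1) := (⟨k, hkn'⟩ : Fin n).castSucc with hp
        set p' : Fin (n + 1) := (⟨k, hkn'⟩ : Fin n).succ with hp'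
        have hpp : p' ≠ p := by
          intro h; rw [Fin.ext_iff] at h; simp [hp, hp'] at h
        let φ : R → R → X := fun b y =>
          B.r c (cocycleBoundary B T (Function.update (Function.update a p b) p' (y * a p')))
        have key := zpd hR φ ?_ ?_ ?_ ?_ ?_ (a p)
        · have e1 : φ (a p) 1 = B.r c (cocycleBoundary B T a) := by
            simp [φ]
          have e2 : φ 1 (a p) = 0 := by
            simp only [φ]
            rw [cb_norm B hl hr T hT _ p, map_zero]
            rw [Function.update_of_ne hpp.symm]
            simp
          rw [← e1, key, e2]
        · intro y
          obtain ⟨g, hg⟩ := cb_lin B T (Function.update a p' (y * a p')) p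
          exact ⟨(B.r c).comp g, fun b => by
            simp only [φ]; rw [Function.update_comm hpp.symm, hg]; rfl⟩
        · intro b
          obtain ⟨g, hg⟩ := cb_lin B T (Function.update a p b) p'
          exact ⟨(B.r c).comp (g.comp (LinearMap.mulRight ℂ (a p'))), fun y => by
            simp only [φ]; rw [hg]; rfl⟩
        · intro y
          exact (r_cont B).comp (continuous_const.prodMk
            (hFc.comp ((continuous_const.update _ continuous_id).update _ continuous_const)))
        · intro b
          exact (r_cont B).comp (continuous_const.prodMk
            (hFc.comp (continuous_const.update _ (continuous_id.mul continuous_const))))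
        · intro b y hby
          apply ih
          · intro i hi
            by_cases hik : (i : ℕ) = k
            · have e1 : i.castSucc = p := Fin.ext (by simp [hp, hik])
              have e2 : i.succ = p' := Fin.ext (by simp [hp', hik])
              rw [e1, e2, Function.update_self, Function.update_of_ne hpp.symm,
                Function.update_self, ← mul_assoc, hby, zero_mul]
            · have e2 : i.succ ≠ p' := by
                intro h; rw [Fin.ext_iff] at h; simp [hp'] at h; omega
              have e3 : i.succ ≠ p := by
                intro h; rw [Fin.ext_iff] at h; simp [hp] at h; omega
              have e4 : i.castSucc ≠ p := by
                intro h; rw [Fin.ext_iff] at h; simp [hp] at h; omega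
              rw [Function.update_of_ne e2, Function.update_of_ne e3]
              by_cases e5 : i.castSucc = p'
              · rw [e5, Function.update_self, mul_assoc, ← e5, h i (by omega), mul_zero]
              · rw [Function.update_of_ne e5, Function.update_of_ne e4, h i (by omega)]
          · intro _
            have e4 : Fin.last n ≠ p := by
              intro h; rw [Fin.ext_iff] at h; simp [hp] at h; omega
            by_cases e5 : Fin.last n = p'
            · rw [e5, Function.update_self, mul_assoc, ← e5, hc (by omega), mul_zero]
            · rw [Function.update_of_ne e5, Function.update_of_ne e4, hc (by omega)]
  have := claim (n + 1) le_rfl a 1 (fun i hi => by have := i.2; omega) (by omega)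
  rwa [hr] at this

end PartOne


section PartOneB

variable {R X : Type*} [NormedRing R] [NormedAlgebra ℂ R] [NormedAddCommGroup X] [NormedSpace ℂ X]

/-- unital extension of one action -/
noncomputable def extAct (l : R →ₗ[ℂ] X →ₗ[ℂ] X) : (R × ℂ) →ₗ[ℂ] X →ₗ[ℂ] X :=
  l.comp (LinearMap.fst ℂ R ℂ) + (LinearMap.toSpanSingleton ℂ _ (LinearMap.id - l 1)).comp
    (LinearMap.snd ℂ R ℂ)

theorem extAct_apply (l : R →ₗ[ℂ] X →ₗ[ℂ] X) (a : R × ℂ) (x : X) :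
    extAct l a x = l a.1 x + a.2 • (x - l 1 x) := by
  simp [extAct]

theorem extAct_bdd (l : R →ₗ[ℂ] X →ₗ[ℂ] X) (h : ∃ C : ℝ, ∀ a m, ‖l a m‖ ≤ C * ‖a‖ * ‖m‖) :
    ∃ C : ℝ, ∀ a m, ‖extAct l a m‖ ≤ C * ‖a‖ * ‖m‖ := by
  obtain ⟨C, hC⟩ := h
  refine ⟨|C| + (1 + |C| * ‖(1 : R)‖), fun a m => ?_⟩
  rw [extAct_apply]
  have h1 : ‖l a.1 m‖ ≤ |C| * ‖a‖ * ‖m‖ := by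
    refine (hC _ _).trans ?_
    gcongr
    · exact le_abs_self C
    · exact norm_fst_le a
  have h2 : ‖l 1 m‖ ≤ |C| * ‖(1 : R)‖ * ‖m‖ := by
    refine (hC _ _).trans ?_
    gcongr
    exact le_abs_self C
  have h3 : ‖a.2 • (m - l 1 m)‖ ≤ ‖a‖ * (‖m‖ + |C| * ‖(1 : R)‖ * ‖m‖) := by
    rw [norm_smul]
    gcongr
    · exact norm_snd_le a
    · exact (norm_sub_le _ _).trans (by gcongr)
  refine (norm_add_le _ _).trans ((add_le_add h1 h3).trans (le_of_eq ?_))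
  ring

/-- the unital extension of a bimodule -/
noncomputable def extMod (B : BanachBimodule R X) : BanachBimodule (R × ℂ) X where
  l := extAct B.l
  r := extAct B.r
  l_mul a b m := by
    simp only [extAct_apply, Prod.fst_mul, Prod.snd_mul, map_add, map_sub, map_smul, B.l_mul,
      ← B.l_mul _ 1, ← B.l_mul 1, mul_one, one_mul, mul_smul]
    simp [smul_comm a.2 b.2]
  r_mul a b m := by
    simp only [extAct_apply, Prod.fst_mul, Prod.snd_mul, map_add, map_sub, map_smul, B.r_mul,
      ← B.r_mul _ 1, ← B.r_mul 1, mul_one, one_mul, mul_smul]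
    simp [smul_comm a.2 b.2]
  l_r a b m := by
    simp only [extAct_apply, map_add, map_sub, map_smul, B.l_r, smul_add, smul_sub]
    rw [smul_comm a.2 b.2, smul_comm a.2 b.2, smul_comm a.2 b.2]
    abel_nf
    try simp [B.l_r, smul_comm a.2 b.2]
  l_bdd := extAct_bdd _ B.l_bdd
  r_bdd := extAct_bdd _ B.r_bdd

theorem idemGen_prod (hR : IdemGen R) : IdemGen (R × ℂ) := by
  intro J hJ hid x
  have h0 : ((0, 1) : R × ℂ) ∈ J := hid _ (by simp)
  have h1 : ((1, 0) : R × ℂ) ∈ J := hid _ (by simp)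
  let J1 : Subalgebra ℂ R :=
    { carrier := {a | ((a, 0) : R × ℂ) ∈ J}
      mul_mem' := by
        intro u v hu hv
        have := J.mul_mem hu hv
        simpa using this
      add_mem' := by
        intro u v hu hv
        have := J.add_mem hu hv
        simpa using this
      algebraMap_mem' := by
        intro c
        have := J.smul_mem h1 c
        simpa [Algebra.algebraMap_eq_smul_one] using this }
  have h2 := hR J1 (hJ.preimage (by fun_prop : Continuous fun a : R => ((a, 0) : R × ℂ)))
    (fun e he => hid _ (by simp [he])) x.1
  have h3 : ((x.1, 0) : R × ℂ) ∈ J := h2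
  have := J.add_mem h3 (J.smul_mem h0 x.2)
  simpa using this

/-- the projection to the algebra which kills the unit -/
noncomputable def prU : (R × ℂ) →ₗ[ℂ] R :=
  LinearMap.fst ℂ R ℂ - (LinearMap.toSpanSingleton ℂ R 1).comp (LinearMap.snd ℂ R ℂ)

theorem prU_apply (a : R × ℂ) : prU a = a.1 - a.2 • (1 : R) := by simp [prU]

/-- pulled back map -/
noncomputable def pb {n : ℕ} (T : MultilinearMap ℂ (fun _ : Fin n => R) X) :
    MultilinearMap ℂ (fun _ : Fin n => R × ℂ) X := T.compLinearMap (fun _ => prU)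

theorem pb_apply {n : ℕ} (T : MultilinearMap ℂ (fun _ : Fin n => R) X) (a : Fin n → R × ℂ) :
    pb T a = T (fun i => prU (a i)) := rfl

theorem pb_norm {n : ℕ} (T : MultilinearMap ℂ (fun _ : Fin n => R) X) (a : Fin n → R × ℂ)
    (h : ∃ i, a i = 1) : pb T a = 0 := by
  obtain ⟨i, hi⟩ := h
  rw [pb_apply]
  exact T.map_coord_zero i (by simp [hi, prU_apply])

theorem pb_bdry (B : BanachBimodule R X) {n : ℕ} (T : MultilinearMap ℂ (fun _ : Fin n => R) X)
    (a : Fin (n + 1) → R) :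
    cocycleBoundary (extMod B) (pb T) (fun i => (a i, 0)) = cocycleBoundary B T a := by
  rw [cb_eq, cb_eq]
  have : ∀ j : Fin n, pb T (ctr j (fun i => ((a i, 0) : R × ℂ))) = T (ctr j a) := by
    intro j
    rw [pb_apply]
    congr 1
    funext i
    simp only [ctr, prU_apply]
    split_ifs <;> simp
  simp only [this]
  simp [pb_apply, prU_apply, extMod, extAct_apply]

theorem ext_l_one (B : BanachBimodule R X) (x : X) : (extMod B).l 1 x = x := by
  simp [extMod, extAct_apply]

theorem ext_r_one (B : BanachBimodule R X) (x : X) : (extMod B).r 1 x = x := by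
  simp [extMod, extAct_apply]

theorem pb_bdry2 (B : BanachBimodule R X) {n : ℕ} (T : MultilinearMap ℂ (fun _ : Fin n => R) X)
    (a : Fin (n + 1) → R × ℂ) :
    cocycleBoundary (extMod B) (pb T) a =
      cocycleBoundary (extMod B) (pb T) (fun i => (prU (a i), 0)) := by
  have key : ∀ k : ℕ, k ≤ n + 1 → cocycleBoundary (extMod B) (pb T) a =
      cocycleBoundary (extMod B) (pb T)
        (fun i => if (i : ℕ) < k then (prU (a i), 0) else a i) := by
    intro k
    induction k with
    | zero => intro _; simp
    | succ k ih =>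
      intro hk
      rw [ih (by omega)]
      set p : Fin (n + 1) := ⟨k, by omega⟩ with hp
      set c : Fin (n + 1) → R × ℂ := fun i => if (i : ℕ) < k then (prU (a i), 0) else a i with hc
      obtain ⟨g, hg⟩ := cb_lin (extMod B) (pb T) c p
      have e1 : c = Function.update c p ((prU (a p), 0) + (a p).2 • (1 : R × ℂ)) := by
        rw [eq_comm, Function.update_eq_self_iff]
        simp only [hc]
        rw [if_neg (by simp [hp])]
        ext <;> simp [prU_apply]
      have e2 : (fun i : Fin (n + 1) => if (i : ℕ) < k + 1 then ((prU (a i), 0) : R × ℂ) else a i)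
          = Function.update c p (prU (a p), 0) := by
        funext i
        rw [Function.update_apply]
        simp only [hc]
        by_cases hi : i = p
        · subst hi; simp [hp]
        · have : (i : ℕ) ≠ k := fun h => hi (Fin.ext h)
          rw [if_neg hi]
          split_ifs <;> first | rfl | omega
      have e3 : g 1 = 0 := by
        rw [← hg]
        exact cb_norm _ (ext_l_one B) (ext_r_one B) _ (pb_norm T) _ p (by simp)
      rw [e2, hg]
      conv_lhs => rw [e1]
      rw [hg, map_add, map_smul, e3]
      simp
  rw [key (n + 1) le_rfl]
  congr 1
  funext i
  rw [if_pos i.2]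

theorem main_red (hR : IdemGen R) (B : BanachBimodule R X) {n : ℕ}
    (T : MultilinearMap ℂ (fun _ : Fin n => R) X)
    (hT : IsBoundedLocalCocycle B T) : IsBoundedCocycle B T := by
  refine ⟨hT.1, fun a => ?_⟩
  rw [← pb_bdry]
  have hpc : Continuous (prU : (R × ℂ) →ₗ[ℂ] R) := by
    have : ((prU : (R × ℂ) →ₗ[ℂ] R) : (R × ℂ) → R) = fun a => a.1 - a.2 • (1 : R) :=
      funext prU_apply
    rw [this]; fun_prop
  refine main_norm (idemGen_prod hR) (extMod B) (ext_l_one B) (ext_r_one B) (pb T) ?_ (pb_norm T)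
    ?_ _
  · exact hT.1.comp (continuous_pi fun i => hpc.comp (continuous_apply i))
  · intro b
    obtain ⟨T', h1, h2⟩ := hT.2 (fun i => prU (b i))
    refine ⟨pb T', fun c => ?_, h2⟩
    rw [pb_bdry2, pb_bdry, h1.2]

end PartOneB


set_option linter.unusedSimpArgs false
set_option linter.unusedVariables false
set_option linter.unusedSectionVars false

section Abs

variable {Q : Type*} [Ring Q] [Algebra ℂ Q] {S : Subalgebra ℂ Q} {J : NonUnitalSubalgebra ℂ Q}

theorem abs0 (hJ : ∀ e ∈ S, e * e = e → e ∈ J) {e x : Q} (he : e ∈ S) (hx : x ∈ S)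
    (hee : e * e = e) : e * x * (1 - e) ∈ J := by
  have h1 : e + e * x * (1 - e) ∈ J := by
    apply hJ
    · exact S.add_mem he (S.mul_mem (S.mul_mem he hx) (S.sub_mem S.one_mem he))
    · have h : (1 - e) * e = 0 := by rw [sub_mul, hee, one_mul, sub_self]
      have : (e + e * x * (1 - e)) * (e + e * x * (1 - e)) = e * e + (e * e) * x * (1 - e)
        + e * x * ((1 - e) * e) + e * x * ((1 - e) * e) * x * (1 - e) := by noncomm_ring
      rw [this, h, hee]; simp
  have h2 := sub_mem h1 (hJ e he hee)
  simpa using h2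

theorem idem_compl {e : Q} (hee : e * e = e) : (1 - e) * (1 - e) = 1 - e := by
  have : (1 - e) * (1 - e) = 1 - e - e + e * e := by noncomm_ring
  rw [this, hee]; noncomm_ring

theorem abs0' (hJ : ∀ e ∈ S, e * e = e → e ∈ J) {e x : Q} (he : e ∈ S) (hx : x ∈ S)
    (hee : e * e = e) : (1 - e) * x * e ∈ J := by
  have := abs0 hJ (S.sub_mem S.one_mem he) hx (idem_compl hee)
  simpa using this

theorem abs1 (hJ : ∀ e ∈ S, e * e = e → e ∈ J) {e x a b : Q} (he : e ∈ S) (hx : x ∈ S)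
    (ha : a ∈ S) (hb : b ∈ S) (hee : e * e = e) : a * (e * x * (1 - e)) * b ∈ J := by
  have hf : 1 - e ∈ S := S.sub_mem S.one_mem he
  have hff := idem_compl hee
  set f := 1 - e with hfdef
  have hef : e + f = 1 := by simp [hfdef]
  set y := e * x * f with hy
  have hyS : y ∈ S := S.mul_mem (S.mul_mem he hx) hf
  have hey : e * y = y := by rw [hy, ← mul_assoc, ← mul_assoc, hee]
  have hyf : y * f = y := by rw [hy, mul_assoc, hff]
  have hz : a * y * b ∈ S := S.mul_mem (S.mul_mem ha hyS) hb
  have h1 : e * (a * y * b) * f ∈ J := abs0 hJ he hz hee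
  have h2 : f * (a * y * b) * e ∈ J := abs0' hJ he hz hee
  have h3 : e * (a * y) * f * (f * b * e) ∈ J :=
    mul_mem (abs0 hJ he (S.mul_mem ha hyS) hee) (abs0' hJ he hb hee)
  have h4 : f * a * e * (e * (y * b) * f) ∈ J :=
    mul_mem (abs0' hJ he ha hee) (abs0 hJ he (S.mul_mem hyS hb) hee)
  have e3 : e * (a * y) * f * (f * b * e) = e * (a * y * b) * e := by
    calc _ = e * a * (y * (f * f)) * b * e := by noncomm_ring
      _ = _ := by rw [hff, hyf]; noncomm_ring
  have e4 : f * a * e * (e * (y * b) * f) = f * (a * y * b) * f := by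
    calc _ = f * a * ((e * e) * y) * b * f := by noncomm_ring
      _ = _ := by rw [hee, hey]; noncomm_ring
  rw [e3] at h3
  rw [e4] at h4
  have := add_mem (add_mem h1 h2) (add_mem h3 h4)
  have e5 : e * (a * y * b) * f + f * (a * y * b) * e + (e * (a * y * b) * e + f * (a * y * b) * f)
    = (e + f) * (a * y * b) * (e + f) := by noncomm_ring
  rw [e5, hef] at this
  simpa using this

theorem abs2 (hJ : ∀ e ∈ S, e * e = e → e ∈ J) {e x a b : Q} (he : e ∈ S) (hx : x ∈ S)
    (ha : a ∈ S) (hb : b ∈ S) (hee : e * e = e) (h1 : e * x * e = 0)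
    (h2 : (1 - e) * x * (1 - e) = 0) : a * x * b ∈ J := by
  have A := abs1 hJ he hx ha hb hee
  have B := abs1 hJ (S.sub_mem S.one_mem he) hx ha hb (idem_compl hee)
  have := add_mem A B
  convert this using 1
  calc a * x * b = a * (e * x * e + e * x * (1 - e) + (1 - e) * x * (1 - (1 - e))
        + (1 - e) * x * (1 - e)) * b := by noncomm_ring
    _ = _ := by rw [h1, h2]; noncomm_ring

theorem abs4 (hJ : ∀ e ∈ S, e * e = e → e ∈ J) {w w' a b : Q} (hw : w ∈ S) (hw' : w' ∈ S)
    (ha : a ∈ S) (hb : b ∈ S) (h1 : w * w = 0) (h2 : w * w' * w = w) : a * w * b ∈ J := by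
  refine abs2 hJ (S.mul_mem hw' hw) hw ha hb ?_ ?_ ?_
  · calc w' * w * (w' * w) = w' * (w * w' * w) := by noncomm_ring
      _ = _ := by rw [h2]
  · calc w' * w * w * (w' * w) = w' * (w * w) * w' * w := by noncomm_ring
      _ = _ := by rw [h1]; simp
  · calc (1 - w' * w) * w * (1 - w' * w) = (1 - w' * w) * (w - w * w' * w) := by noncomm_ring
      _ = _ := by rw [h2]; simp

/-- reduction by a halving pair -/
theorem abs5 (hJ : ∀ e ∈ S, e * e = e → e ∈ J) {w w' T : Q} (hw : w ∈ S) (hw' : w' ∈ S)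
    (hT : T ∈ S) (h1 : w * w = 0) (h2 : w * w' * w = w) (h1' : w' * w' = 0) (h2' : w' * w * w' = w')
    (hf : (1 - (w * w' + w' * w)) * T * (1 - (w * w' + w' * w)) ∈ J) : T ∈ J := by
  set e := w * w' + w' * w with he
  have heS : e ∈ S := S.add_mem (S.mul_mem hw hw') (S.mul_mem hw' hw)
  have key : ∀ a ∈ S, ∀ b ∈ S, a * e * b ∈ J := by
    intro a ha b hb
    have A := abs4 hJ hw hw' ha (S.mul_mem hw' hb) h1 h2
    have B := abs4 hJ hw hw' (S.mul_mem ha hw') hb h1 h2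
    convert add_mem A B using 1
    rw [he]; noncomm_ring
  have A := key 1 S.one_mem T hT
  have B := key ((1 - e) * T) (S.mul_mem (S.sub_mem S.one_mem heS) hT) 1 S.one_mem
  convert add_mem (add_mem A B) hf using 1
  noncomm_ring

end Abs

/-- A subalgebra of operators is (norm-closed non-unitally) generated by its idempotents. -/
def IG {V : Type*} [NormedAddCommGroup V] [NormedSpace ℂ V] (S : Subalgebra ℂ (V →L[ℂ] V)) : Prop :=
  ∀ J : NonUnitalSubalgebra ℂ (V →L[ℂ] V), IsClosed (J : Set (V →L[ℂ] V)) →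
    (∀ e ∈ S, e * e = e → e ∈ J) → ∀ x ∈ S, x ∈ J

theorem IG_transport {V H : Type*} [NormedAddCommGroup V] [NormedSpace ℂ V]
    [NormedAddCommGroup H] [NormedSpace ℂ H] {S : Subalgebra ℂ (V →L[ℂ] V)}
    {S' : Subalgebra ℂ (H →L[ℂ] H)} (hS : IG S) (i : V →L[ℂ] H) (p : H →L[ℂ] V)
    (hpi : ∀ v, p (i v) = v) (hmem : ∀ x ∈ S, i ∘L x ∘L p ∈ S')
    (J : NonUnitalSubalgebra ℂ (H →L[ℂ] H)) (hJc : IsClosed (J : Set (H →L[ℂ] H)))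
    (hJ : ∀ e ∈ S', e * e = e → e ∈ J) (x : V →L[ℂ] V) (hx : x ∈ S) : i ∘L x ∘L p ∈ J := by
  let φ : (V →L[ℂ] V) → (H →L[ℂ] H) := fun x => i ∘L x ∘L p
  have hφm : ∀ x y, φ (x * y) = φ x * φ y := by
    intro x y; ext z; simp [φ, hpi]
  let J1 : NonUnitalSubalgebra ℂ (V →L[ℂ] V) :=
    { carrier := {x | φ x ∈ J}
      mul_mem' := by
        intro u v hu hv
        have hu' : φ u ∈ J := hu
        have hv' : φ v ∈ J := hv
        change φ (u * v) ∈ J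
        rw [hφm]; exact mul_mem hu' hv'
      add_mem' := by
        intro u v hu hv
        have : φ (u + v) = φ u + φ v := by ext; simp [φ]
        change φ (u + v) ∈ J; rw [this]; exact add_mem hu hv
      zero_mem' := by
        have : φ 0 = 0 := by ext; simp [φ]
        change φ 0 ∈ J; rw [this]; exact zero_mem _
      smul_mem' := by
        intro c u hu
        have : φ (c • u) = c • φ u := by ext; simp [φ]
        change φ (c • u) ∈ J; rw [this]; exact SMulMemClass.smul_mem c hu }
  refine hS J1 (hJc.preimage ?_) ?_ x hx
  · simp only [φ]; fun_prop
  · intro e he hee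
    exact hJ _ (hmem e he) (by rw [← hφm, hee])

section W

variable {E F : Type*} [NormedAddCommGroup E] [InnerProductSpace ℂ E]
  [NormedAddCommGroup F] [InnerProductSpace ℂ F]

theorem exists_W [CompleteSpace F] {ι : Type*} {u : ι → E} {v : ι → F} (hu : Orthonormal ℂ u)
    (hv : Orthonormal ℂ v) (α : ι → ℂ) (C : ℝ) (hC : 0 ≤ C) (h : ∀ i, ‖α i‖ ≤ C) :
    ∃ W : E →L[ℂ] F, (∀ i, W (u i) = α i • v i) ∧ (∀ x, (∀ i, inner ℂ (u i) x = 0) → W x = 0)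
      ∧ ‖W‖ ≤ C := by
  have hsum : ∀ x, Summable fun i => ‖α i * inner ℂ (u i) x‖ ^ 2 := by
    intro x
    refine Summable.of_nonneg_of_le (fun i => by positivity) (fun i => ?_)
      ((hu.inner_products_summable x).mul_left (C ^ 2))
    rw [norm_mul, mul_pow]
    gcongr
    exact h i
  have hmem : ∀ x, Memℓp (fun i => α i * inner ℂ (u i) x) 2 := by
    intro x
    refine memℓp_gen ?_
    simpa using hsum x
  let L : E →ₗ[ℂ] lp (fun _ : ι => ℂ) 2 :=
    { toFun := fun x => ⟨fun i => α i * inner ℂ (u i) x, hmem x⟩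
      map_add' := by intro x y; ext i; simp [inner_add_right, mul_add]; rfl
      map_smul' := by intro c x; ext i; simp [inner_smul_right]; ring }
  have hL : ∀ x, ‖L x‖ ≤ C * ‖x‖ := by
    intro x
    have h1 : ‖L x‖ ^ 2 = ∑' i, ‖α i * inner ℂ (u i) x‖ ^ 2 := by
      have := lp.norm_rpow_eq_tsum (p := 2) (by norm_num) (L x)
      simp only [ENNReal.toReal_ofNat, Real.rpow_two] at this
      exact this
    have h2 : ‖L x‖ ^ 2 ≤ (C * ‖x‖) ^ 2 := by
      rw [h1]
      calc _ ≤ ∑' i, C ^ 2 * ‖inner ℂ (u i) x‖ ^ 2 := by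
            refine (hsum x).tsum_le_tsum (fun i => ?_) ((hu.inner_products_summable x).mul_left _)
            rw [norm_mul, mul_pow]
            gcongr
            exact h i
        _ = C ^ 2 * ∑' i, ‖inner ℂ (u i) x‖ ^ 2 := tsum_mul_left
        _ ≤ C ^ 2 * ‖x‖ ^ 2 := by
            gcongr
            exact hu.tsum_inner_products_le x
        _ = _ := by ring
    exact le_of_sq_le_sq h2 (by positivity)
  let Vv := hv.orthogonalFamily.linearIsometry
  refine ⟨Vv.toContinuousLinearMap ∘L L.mkContinuous C hL, fun i => ?_, fun x hx => ?_, ?_⟩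
  · classical
    have : L (u i) = lp.single 2 i (α i) := by
      ext j
      by_cases hij : j = i
      · subst hij
        simp [L, inner_self_eq_norm_sq_to_K, hu.1 j]
      · simp [L, hu.2 hij, Pi.single_eq_of_ne hij]
    simp [Vv, this, OrthogonalFamily.linearIsometry_apply_single]
  · have : L x = 0 := by ext j; simp [L, hx]
    simp [this]
  · refine ContinuousLinearMap.opNorm_le_bound _ hC fun x => ?_
    simpa using hL x

theorem basis_ext {Ω G : Type*} [NormedAddCommGroup G] [NormedSpace ℂ G] (b : HilbertBasis Ω ℂ E)
    {S T : E →L[ℂ] G} (h : ∀ i, S (b i) = T (b i)) : S = T := by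
  refine ContinuousLinearMap.ext_on (s := Set.range b) ?_ ?_
  · have := b.dense_span
    rwa [← Submodule.dense_iff_topologicalClosure_eq_top] at this
  · rintro _ ⟨i, rfl⟩; exact h i

theorem exists_wm [CompleteSpace F] {Ω Ω' : Type*} (b : HilbertBasis Ω ℂ E)
    (c : HilbertBasis Ω' ℂ F) (σ : Ω → Ω') (α : Ω → ℂ) (C : ℝ) (hC : 0 ≤ C) (h : ∀ i, ‖α i‖ ≤ C)
    (hσ : Set.InjOn σ {i | α i ≠ 0}) :
    ∃ W : E →L[ℂ] F, (∀ i, W (b i) = α i • c (σ i)) ∧ ‖W‖ ≤ C := by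
  obtain ⟨W, h1, h2, h3⟩ := exists_W (u := fun i : {i | α i ≠ 0} => b i)
    (v := fun i : {i | α i ≠ 0} => c (σ i)) (b.orthonormal.comp _ Subtype.val_injective)
    (c.orthonormal.comp _ (Set.injOn_iff_injective.1 hσ)) (fun i => α i) C hC (fun i => h i)
  refine ⟨W, fun i => ?_, h3⟩
  by_cases hi : α i = 0
  · rw [hi, zero_smul]
    apply h2
    rintro ⟨j, hj⟩
    apply b.orthonormal.2
    rintro rfl
    exact hj hi
  · exact h1 ⟨i, hi⟩

end W


universe uu in
theorem halving1 (F : Type uu) : ∃ (κ : Type uu) (α β : κ → F), Function.Injective α ∧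
    Function.Injective β ∧ (∀ x y, α x ≠ β y) ∧ ∀ x y, x ∉ Set.range α → x ∉ Set.range β →
      y ∉ Set.range α → y ∉ Set.range β → x = y := by
  rcases finite_or_infinite F with hF | hF
  · obtain ⟨n, ⟨e⟩⟩ := Finite.exists_equiv_fin F
    refine ⟨ULift (Fin (n / 2)), fun i => e.symm ⟨2 * i.down, by have := i.down.2; omega⟩,
      fun i => e.symm ⟨2 * i.down + 1, by have := i.down.2; omega⟩, ?_, ?_, ?_, ?_⟩
    · intro i j h
      simp at h
      ext; omega
    · intro i j h
      simp at h
      ext; omega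
    · intro i j h
      simp at h
      omega
    · have key : ∀ x : F, x ∉ Set.range (fun i : ULift.{uu} (Fin (n / 2)) =>
          e.symm ⟨2 * i.down, by have := i.down.2; omega⟩) →
          x ∉ Set.range (fun i : ULift.{uu} (Fin (n / 2)) =>
          e.symm ⟨2 * i.down + 1, by have := i.down.2; omega⟩) → (e x : ℕ) = 2 * (n / 2) := by
        intro x h1 h2
        have hx := (e x).2
        by_contra hne
        have hlt : (e x : ℕ) / 2 < n / 2 := by omega
        rcases Nat.even_or_odd' (e x : ℕ) with ⟨m, hm | hm⟩
        · refine h1 ⟨⟨⟨m, by omega⟩⟩, ?_⟩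
          simp only [Equiv.symm_apply_eq]
          exact Fin.ext hm.symm
        · refine h2 ⟨⟨⟨m, by omega⟩⟩, ?_⟩
          simp only [Equiv.symm_apply_eq]
          exact Fin.ext hm.symm
      intro x y h1 h2 h3 h4
      apply e.injective
      apply Fin.ext
      rw [key x h1 h2, key y h3 h4]
  · have : Nonempty (F ⊕ F ≃ F) := by
      rw [← Cardinal.eq, Cardinal.mk_sum, Cardinal.lift_id]
      exact Cardinal.add_eq_self (Cardinal.aleph0_le_mk F)
    obtain ⟨e⟩ := this
    refine ⟨F, fun x => e (Sum.inl x), fun x => e (Sum.inr x), ?_, ?_, ?_, ?_⟩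
    · intro x y h; simpa using h
    · intro x y h; simpa using h
    · intro x y h; simp at h
    · intro x y h1 h2
      exfalso
      rcases hx : e.symm x with z | z
      · exact h1 ⟨z, by simp [← hx]⟩
      · exact h2 ⟨z, by simp [← hx]⟩

universe uu in
theorem halving (Ω : Type uu) (k : Ω → ℕ) : ∃ (κ : Type uu) (α β : κ → Ω), Function.Injective α ∧
    Function.Injective β ∧ (∀ x y, α x ≠ β y) ∧ (∀ x, k (α x) = k (β x)) ∧
    ∀ x y, x ∉ Set.range α → x ∉ Set.range β →
      y ∉ Set.range α → y ∉ Set.range β → k x = k y → x = y := by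
  choose κ α β h1 h2 h3 h4 using fun j : ℕ => halving1 {x : Ω // k x = j}
  refine ⟨Σ j, κ j, fun p => (α p.1 p.2).1, fun p => (β p.1 p.2).1, ?_, ?_, ?_, ?_, ?_⟩
  · rintro ⟨i, x⟩ ⟨j, y⟩ h
    simp only at h
    have hij : i = j := by rw [← (α i x).2, ← (α j y).2, h]
    subst hij
    rw [h1 i (Subtype.ext h)]
  · rintro ⟨i, x⟩ ⟨j, y⟩ h
    simp only at h
    have hij : i = j := by rw [← (β i x).2, ← (β j y).2, h]
    subst hij
    rw [h2 i (Subtype.ext h)]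
  · rintro ⟨i, x⟩ ⟨j, y⟩ h
    simp only at h
    have hij : i = j := by rw [← (α i x).2, ← (β j y).2, h]
    subst hij
    exact h3 i _ _ (Subtype.ext h)
  · rintro ⟨i, x⟩
    rw [(α i x).2, (β i x).2]
  · intro x y hx1 hx2 hy1 hy2 hxy
    have := h4 (k y) ⟨x, hxy⟩ ⟨y, rfl⟩ ?_ ?_ ?_ ?_
    · exact congrArg Subtype.val this
    · rintro ⟨z, hz⟩; exact hx1 ⟨⟨_, z⟩, by simp [hz]⟩
    · rintro ⟨z, hz⟩; exact hx2 ⟨⟨_, z⟩, by simp [hz]⟩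
    · rintro ⟨z, hz⟩; exact hy1 ⟨⟨_, z⟩, by simp [hz]⟩
    · rintro ⟨z, hz⟩; exact hy2 ⟨⟨_, z⟩, by simp [hz]⟩

section HalfOps

variable {K : Type*} [NormedAddCommGroup K] [InnerProductSpace ℂ K] [CompleteSpace K]

theorem halfops {Ω : Type*} (b : HilbertBasis Ω ℂ K) (k : Ω → ℕ) :
    ∃ (w w' : K →L[ℂ] K) (Λ : Set Ω), Set.InjOn k Λ ∧
      (∀ ω ∈ Λ, w (b ω) = 0 ∧ w' (b ω) = 0) ∧
      ∀ ω, ω ∉ Λ → ∃ ω', k ω' = k ω ∧ ω' ∉ Λ ∧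
       ((w (b ω) = b ω' ∧ w' (b ω) = 0 ∧ w' (b ω') = b ω ∧ w (b ω') = 0) ∨
        (w' (b ω) = b ω' ∧ w (b ω) = 0 ∧ w (b ω') = b ω ∧ w' (b ω') = 0)) := by
  obtain ⟨κ, α, β, ha, hb, hab, hk, hL⟩ := halving Ω k
  have oα : Orthonormal ℂ (b ∘ α) := b.orthonormal.comp _ ha
  have oβ : Orthonormal ℂ (b ∘ β) := b.orthonormal.comp _ hb
  obtain ⟨w, w1, w2, -⟩ := exists_W oα oβ (fun _ => 1) 1 zero_le_one (by simp)
  obtain ⟨w', w1', w2', -⟩ := exists_W oβ oα (fun _ => 1) 1 zero_le_one (by simp)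
  simp only [one_smul, Function.comp_apply] at w1 w1' w2 w2'
  refine ⟨w, w', (Set.range α ∪ Set.range β)ᶜ, ?_, ?_, ?_⟩
  · intro x hx y hy hxy
    simp only [Set.mem_compl_iff, Set.mem_union, not_or] at hx hy
    exact hL x y hx.1 hx.2 hy.1 hy.2 hxy
  · intro ω hω
    simp only [Set.mem_compl_iff, Set.mem_union, not_or] at hω
    exact ⟨w2 _ fun i => b.orthonormal.2 fun h => hω.1 ⟨i, h⟩,
      w2' _ fun i => b.orthonormal.2 fun h => hω.2 ⟨i, h⟩⟩
  · intro ω hω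
    simp only [Set.mem_compl_iff, Set.mem_union, not_not] at hω
    have wb : ∀ x, w (b (β x)) = 0 := fun x => w2 _ fun i => b.orthonormal.2 (hab i x)
    have wa : ∀ x, w' (b (α x)) = 0 := fun x => w2' _ fun i => b.orthonormal.2 (hab x i).symm
    rcases hω with ⟨x, rfl⟩ | ⟨x, rfl⟩
    · exact ⟨β x, (hk x).symm, by simp, Or.inl ⟨w1 x, wa x, w1' x, wb x⟩⟩
    · exact ⟨α x, hk x, by simp, Or.inr ⟨w1' x, wb x, w1 x, wa x⟩⟩

/-- algebraic form of `halfops` -/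
theorem halfops' {Ω : Type*} (b : HilbertBasis Ω ℂ K) (k : Ω → ℕ) :
    ∃ (w w' : K →L[ℂ] K) (Λ : Set Ω), Set.InjOn k Λ ∧ w * w = 0 ∧ w' * w' = 0 ∧ w * w' * w = w
      ∧ w' * w * w' = w' ∧ (∀ ω ∈ Λ, (1 - (w * w' + w' * w)) (b ω) = b ω) ∧
      (∀ ω, ω ∉ Λ → (1 - (w * w' + w' * w)) (b ω) = 0) ∧
      ∀ (q : K →L[ℂ] K) (f : ℕ → ℂ), (∀ ω, q (b ω) = f (k ω) • b ω) → w * q = q * w ∧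
        w' * q = q * w' := by
  obtain ⟨w, w', Λ, h1, h2, h3⟩ := halfops b k
  refine ⟨w, w', Λ, h1, basis_ext b ?_, basis_ext b ?_, basis_ext b ?_, basis_ext b ?_, ?_, ?_, ?_⟩
  · intro ω
    by_cases hω : ω ∈ Λ
    · simp [h2 ω hω]
    · obtain ⟨ω', -, -, ⟨e1, e2, e3, e4⟩ | ⟨e1, e2, e3, e4⟩⟩ := h3 ω hω <;> simp [e1, e2, e3, e4]
  · intro ω
    by_cases hω : ω ∈ Λ
    · simp [h2 ω hω]
    · obtain ⟨ω', -, -, ⟨e1, e2, e3, e4⟩ | ⟨e1, e2, e3, e4⟩⟩ := h3 ω hω <;> simp [e1, e2, e3, e4]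
  · intro ω
    by_cases hω : ω ∈ Λ
    · simp [h2 ω hω]
    · obtain ⟨ω', -, -, ⟨e1, e2, e3, e4⟩ | ⟨e1, e2, e3, e4⟩⟩ := h3 ω hω <;> simp [e1, e2, e3, e4]
  · intro ω
    by_cases hω : ω ∈ Λ
    · simp [h2 ω hω]
    · obtain ⟨ω', -, -, ⟨e1, e2, e3, e4⟩ | ⟨e1, e2, e3, e4⟩⟩ := h3 ω hω <;> simp [e1, e2, e3, e4]
  · intro ω hω
    simp [h2 ω hω]
  · intro ω hω
    obtain ⟨ω', -, -, ⟨e1, e2, e3, e4⟩ | ⟨e1, e2, e3, e4⟩⟩ := h3 ω hω <;> simp [e1, e2, e3, e4]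
  · intro q f hq
    refine ⟨basis_ext b fun ω => ?_, basis_ext b fun ω => ?_⟩
    · by_cases hω : ω ∈ Λ
      · simp [h2 ω hω, hq]
      · obtain ⟨ω', hk, -, ⟨e1, e2, e3, e4⟩ | ⟨e1, e2, e3, e4⟩⟩ := h3 ω hω <;>
          simp [e1, e2, e3, e4, hq, hk]
    · by_cases hω : ω ∈ Λ
      · simp [h2 ω hω, hq]
      · obtain ⟨ω', hk, -, ⟨e1, e2, e3, e4⟩ | ⟨e1, e2, e3, e4⟩⟩ := h3 ω hω <;>
          simp [e1, e2, e3, e4, hq, hk]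

theorem IG_top : IG (⊤ : Subalgebra ℂ (K →L[ℂ] K)) := by
  intro J hJc hJ T _
  obtain ⟨s, b, -⟩ := exists_hilbertBasis ℂ K
  obtain ⟨w, w', Λ, h1, h2, h3, h4, h5, h6, h7, -⟩ := halfops' b (fun _ => 0)
  refine abs5 hJ (w := w) (w' := w') trivial trivial trivial h2 h4 h3 h5 ?_
  set f := (1 - (w * w' + w' * w)) with hf
  have hff : f * f = f := basis_ext b fun ω => by
    by_cases hω : ω ∈ Λ
    · simp [h6 ω hω]
    · simp [h7 ω hω]
  by_cases hΛ : Λ.Nonempty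
  · obtain ⟨l, hl⟩ := hΛ
    have huniq : ∀ ω ∈ Λ, ω = l := fun ω hω => h1 hω hl rfl
    have hfx : ∀ x, f x = (inner ℂ (b l) x : ℂ) • b l := by
      have : f = (innerSL ℂ (b l)).smulRight (b l) := basis_ext b fun ω => by
        by_cases hω : ω ∈ Λ
        · rw [huniq ω hω, h6 l hl]
          simp [inner_self_eq_norm_sq_to_K, b.orthonormal.1]
        · rw [h7 ω hω]
          have : l ≠ ω := by rintro rfl; exact hω hl
          simp [b.orthonormal.2 this]
      intro x
      rw [this]; simp
    have : f * T * f = (inner ℂ (b l) (T (b l)) : ℂ) • f := by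
      refine basis_ext b fun ω => ?_
      by_cases hω : ω ∈ Λ
      · rw [huniq ω hω]
        simp only [mul_apply_eq_comp, h6 l hl, smul_apply]
        rw [hfx]
      · simp [h7 ω hω]
    rw [this]
    exact SMulMemClass.smul_mem _ (hJ f trivial hff)
  · have : f = 0 := basis_ext b fun ω => by
      rw [h7 ω (fun h => hΛ ⟨ω, h⟩)]; simp
    rw [this]; simp

end HalfOps

set_option linter.unusedSimpArgs false
set_option linter.unusedVariables false
set_option linter.unusedSectionVars false

section Model

variable {K : Type*} [NormedAddCommGroup K] [InnerProductSpace ℂ K]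

/-- upper triangular operator on `K × K` -/
noncomputable def mkO (a B D : K →L[ℂ] K) : (K × K) →L[ℂ] (K × K) :=
  (a ∘L ContinuousLinearMap.fst ℂ K K + B ∘L ContinuousLinearMap.snd ℂ K K).prod
    (D ∘L ContinuousLinearMap.snd ℂ K K)

theorem mkO_apply (a B D : K →L[ℂ] K) (x : K × K) : mkO a B D x = (a x.1 + B x.2, D x.2) := rfl

theorem mkO_mul (a B D a' B' D' : K →L[ℂ] K) :
    mkO a B D * mkO a' B' D' = mkO (a * a') (a * B' + B * D') (D * D') := by
  refine ContinuousLinearMap.ext fun x => ?_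
  simp [mkO_apply, add_assoc]

theorem mkO_add (a B D a' B' D' : K →L[ℂ] K) :
    mkO a B D + mkO a' B' D' = mkO (a + a') (B + B') (D + D') := by
  refine ContinuousLinearMap.ext fun x => ?_
  simp [mkO_apply]; abel

theorem mkO_sub (a B D a' B' D' : K →L[ℂ] K) :
    mkO a B D - mkO a' B' D' = mkO (a - a') (B - B') (D - D') := by
  refine ContinuousLinearMap.ext fun x => ?_
  simp [mkO_apply]; abel

theorem mkO_smul (c : ℂ) (a B D : K →L[ℂ] K) :
    c • mkO a B D = mkO (c • a) (c • B) (c • D) := by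
  refine ContinuousLinearMap.ext fun x => ?_
  simp [mkO_apply]

theorem mkO_one : mkO (1 : K →L[ℂ] K) 0 1 = 1 := by
  refine ContinuousLinearMap.ext fun x => ?_
  simp [mkO_apply]

theorem mkO_zero : mkO (0 : K →L[ℂ] K) 0 0 = 0 := by
  refine ContinuousLinearMap.ext fun x => ?_
  simp [mkO_apply]

/-- the model algebra: operators which preserve `K × 0` and the graph of `q` -/
noncomputable def Mdl (q : K →L[ℂ] K) : Subalgebra ℂ ((K × K) →L[ℂ] (K × K)) where
  carrier := {T | (∀ x, (T (x, 0)).2 = 0) ∧ ∀ x, (T (x, q x)).2 = q (T (x, q x)).1}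
  mul_mem' := by
    rintro S T ⟨h1, h2⟩ ⟨h3, h4⟩
    refine ⟨fun x => ?_, fun x => ?_⟩
    · have : T (x, 0) = ((T (x, 0)).1, 0) := Prod.ext rfl (h3 x)
      simp only [mul_apply_eq_comp]
      rw [this, h1]
    · have : T (x, q x) = ((T (x, q x)).1, q (T (x, q x)).1) := Prod.ext rfl (h4 x)
      simp only [mul_apply_eq_comp]
      rw [this, h2]
  add_mem' := by
    rintro S T ⟨h1, h2⟩ ⟨h3, h4⟩
    refine ⟨fun x => ?_, fun x => ?_⟩
    · simp [h1, h3]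
    · simp [h2, h4]
  algebraMap_mem' := by
    intro c
    refine ⟨fun x => ?_, fun x => ?_⟩
    · simp [Algebra.algebraMap_eq_smul_one]
    · simp [Algebra.algebraMap_eq_smul_one]

theorem mem_Mdl {q : K →L[ℂ] K} {T : (K × K) →L[ℂ] (K × K)} : T ∈ Mdl q ↔
    (∀ x, (T (x, 0)).2 = 0) ∧ ∀ x, (T (x, q x)).2 = q (T (x, q x)).1 := Iff.rfl

theorem mkO_mem {q a B D : K →L[ℂ] K} : mkO a B D ∈ Mdl q ↔ D * q = q * a + q * B * q := by
  rw [mem_Mdl]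
  constructor
  · rintro ⟨-, h⟩
    refine ContinuousLinearMap.ext fun x => ?_
    simpa [mkO_apply] using h x
  · intro h
    refine ⟨fun x => by simp [mkO_apply], fun x => ?_⟩
    have := congrArg (fun T : K →L[ℂ] K => T x) h
    simpa [mkO_apply] using this

theorem exists_mkO {q : K →L[ℂ] K} {T : (K × K) →L[ℂ] (K × K)} (hT : T ∈ Mdl q) :
    ∃ a B D, T = mkO a B D ∧ D * q = q * a + q * B * q := by
  have : T = mkO (ContinuousLinearMap.fst ℂ K K ∘L T ∘L ContinuousLinearMap.inl ℂ K K)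
      (ContinuousLinearMap.fst ℂ K K ∘L T ∘L ContinuousLinearMap.inr ℂ K K)
      (ContinuousLinearMap.snd ℂ K K ∘L T ∘L ContinuousLinearMap.inr ℂ K K) := by
    refine ContinuousLinearMap.ext fun x => ?_
    have h : T x = T (x.1, 0) + T (0, x.2) := by rw [← map_add]; simp
    rw [mkO_apply, h]
    ext
    · simp
    · simp [(mem_Mdl.1 hT).1 x.1]
  exact ⟨_, _, _, this, mkO_mem.1 (this ▸ hT)⟩

theorem mkO_comm_mem {q a : K →L[ℂ] K} (h : a * q = q * a) : mkO a 0 a ∈ Mdl q :=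
  mkO_mem.2 (by simp [h])

theorem norm_mkO (X : K →L[ℂ] K) : ‖mkO X 0 X‖ ≤ ‖X‖ := by
  refine ContinuousLinearMap.opNorm_le_bound _ (norm_nonneg _) fun x => ?_
  rw [mkO_apply]
  simp only [zero_apply, add_zero, Prod.norm_mk]
  refine max_le ?_ ?_
  · exact (X.le_opNorm _).trans (by gcongr; exact norm_fst_le x)
  · exact (X.le_opNorm _).trans (by gcongr; exact norm_snd_le x)

/-- rank one coordinate projection -/
noncomputable def cp {Ω : Type*} (b : HilbertBasis Ω ℂ K) (i : Ω) : K →L[ℂ] K :=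
  (innerSL ℂ (b i)).smulRight (b i)

theorem cp_apply {Ω : Type*} (b : HilbertBasis Ω ℂ K) (i : Ω) (x : K) :
    cp b i x = (inner ℂ (b i) x : ℂ) • b i := by simp [cp]

theorem bb_self {Ω : Type*} (b : HilbertBasis Ω ℂ K) (i : Ω) : (inner ℂ (b i) (b i) : ℂ) = 1 := by
  simp [inner_self_eq_norm_sq_to_K, b.orthonormal.1]

theorem bb_ne {Ω : Type*} (b : HilbertBasis Ω ℂ K) {i j : Ω} (h : i ≠ j) :
    (inner ℂ (b i) (b j) : ℂ) = 0 := b.orthonormal.2 h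

theorem bb_ite {Ω : Type*} [DecidableEq Ω] (b : HilbertBasis Ω ℂ K) (i j : Ω) :
    (inner ℂ (b i) (b j) : ℂ) = if i = j then 1 else 0 := by
  split_ifs with h
  · subst h; exact bb_self b i
  · exact bb_ne b h

theorem cp_mul {Ω : Type*} (b : HilbertBasis Ω ℂ K) (i : Ω) (a : K →L[ℂ] K) :
    cp b i * a * cp b i = (inner ℂ (b i) (a (b i)) : ℂ) • cp b i := by
  refine ContinuousLinearMap.ext fun x => ?_
  simp [cp_apply, smul_smul, mul_comm]

theorem cp_idem {Ω : Type*} (b : HilbertBasis Ω ℂ K) (i : Ω) : cp b i * cp b i = cp b i := by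
  have := cp_mul b i 1
  rw [mul_one, one_apply_eq_self, bb_self, one_smul] at this
  exact this

theorem cp_ne {Ω : Type*} (b : HilbertBasis Ω ℂ K) {i j : Ω} (h : i ≠ j) : cp b i * cp b j = 0 := by
  refine ContinuousLinearMap.ext fun x => ?_
  simp [cp_apply, bb_ne b h]

theorem inner_diag {Ω : Type*} (b : HilbertBasis Ω ℂ K) {q : K →L[ℂ] K} {Q : Ω → ℂ}
    (hq : ∀ i, q (b i) = Q i • b i) (i : Ω) (x : K) :
    (inner ℂ (b i) (q x) : ℂ) = Q i * inner ℂ (b i) x := by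
  have : (innerSL ℂ (b i)) ∘L q = Q i • innerSL ℂ (b i) := basis_ext b fun j => by
    by_cases h : i = j
    · subst h; simp [hq]
    · simp [hq, bb_ne b h]
  have := congrArg (fun T => T x) this
  simpa using this

theorem cp_comm {Ω : Type*} (b : HilbertBasis Ω ℂ K) {q : K →L[ℂ] K} {Q : Ω → ℂ}
    (hq : ∀ i, q (b i) = Q i • b i) (i : Ω) : cp b i * q = Q i • cp b i ∧ q * cp b i = Q i • cp b i := by
  constructor <;> refine ContinuousLinearMap.ext fun x => ?_
  · simp [cp_apply, inner_diag b hq, smul_smul]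
  · simp [cp_apply, hq, smul_smul, mul_comm]

theorem cp_mem {Ω : Type*} (b : HilbertBasis Ω ℂ K) {q : K →L[ℂ] K} {Q : Ω → ℂ}
    (hq : ∀ i, q (b i) = Q i • b i) (i : Ω) : mkO (cp b i) 0 (cp b i) ∈ Mdl q :=
  mkO_comm_mem (by rw [(cp_comm b hq i).1, (cp_comm b hq i).2])

theorem cpt_idem {Ω : Type*} (b : HilbertBasis Ω ℂ K) (i : Ω) :
    mkO (cp b i) 0 (cp b i) * mkO (cp b i) 0 (cp b i) = mkO (cp b i) 0 (cp b i) := by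
  rw [mkO_mul, cp_idem]; simp

theorem block {Ω : Type*} (b : HilbertBasis Ω ℂ K) {q : K →L[ℂ] K} {Q : Ω → ℂ}
    (hq : ∀ i, q (b i) = Q i • b i) (hQ : ∀ i, Q i ≠ 0)
    {J : NonUnitalSubalgebra ℂ ((K × K) →L[ℂ] (K × K))}
    (hJ : ∀ e ∈ Mdl q, e * e = e → e ∈ J) {T} (hT : T ∈ Mdl q) (i : Ω) :
    mkO (cp b i) 0 (cp b i) * T * mkO (cp b i) 0 (cp b i) ∈ J := by
  obtain ⟨a, B, D, rfl, h⟩ := exists_mkO hT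
  have hcq := cp_comm b hq i
  set P := cp b i with hP
  have hPP : P * P = P := cp_idem b i
  have E1 : mkO P (-((Q i)⁻¹ • P)) 0 ∈ J := by
    apply hJ
    · rw [mkO_mem, zero_mul, mul_neg, neg_mul, mul_smul_comm, smul_mul_assoc, mul_assoc, hcq.1,
        mul_smul_comm, smul_smul, inv_mul_cancel₀ (hQ i)]
      simp
    · rw [mkO_mul]; simp [hPP]
  have E2 : mkO 0 ((Q i)⁻¹ • P) P ∈ J := by
    apply hJ
    · rw [mkO_mem, mul_smul_comm, smul_mul_assoc, mul_assoc, hcq.1,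
        mul_smul_comm, smul_smul, inv_mul_cancel₀ (hQ i), hcq.2]
      simp
    · rw [mkO_mul]; simp [hPP]
  have hrel : (inner ℂ (b i) (D (b i)) : ℂ)
      = inner ℂ (b i) (a (b i)) + Q i * inner ℂ (b i) (B (b i)) := by
    have := congrArg (fun T : K →L[ℂ] K => (inner ℂ (b i) (T (b i)) : ℂ)) h
    simp [inner_diag b hq, hq, inner_add_right, inner_smul_right] at this
    apply mul_left_cancel₀ (hQ i)
    rw [this]; ring
  have := add_mem (SMulMemClass.smul_mem (inner ℂ (b i) (a (b i)) : ℂ) E1)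
    (SMulMemClass.smul_mem (inner ℂ (b i) (D (b i)) : ℂ) E2)
  convert this using 1
  rw [mkO_mul, mkO_mul, mkO_smul, mkO_smul, mkO_add]
  simp only [mul_zero, zero_mul, add_zero, zero_add, smul_zero]
  rw [cp_mul, cp_mul, cp_mul, hrel]
  congr 1
  rw [smul_neg, smul_smul, smul_smul, ← neg_smul, ← add_smul]
  congr 1
  have := hQ i
  field_simp
  ring

theorem left_cp {Ω : Type*} (b : HilbertBasis Ω ℂ K) {q : K →L[ℂ] K} {Q : Ω → ℂ}
    (hq : ∀ i, q (b i) = Q i • b i) (hQ : ∀ i, Q i ≠ 0)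
    {J : NonUnitalSubalgebra ℂ ((K × K) →L[ℂ] (K × K))}
    (hJ : ∀ e ∈ Mdl q, e * e = e → e ∈ J) {T} (hT : T ∈ Mdl q) (i : Ω) :
    mkO (cp b i) 0 (cp b i) * T ∈ J := by
  have h1 := block b hq hQ hJ hT i
  have h2 := abs0 hJ (cp_mem b hq i) hT (cpt_idem b i)
  have := add_mem h1 h2
  rwa [← mul_add, add_sub_cancel, mul_one] at this

theorem IG_fin {Ω : Type*} [Fintype Ω] (b : HilbertBasis Ω ℂ K) {q : K →L[ℂ] K} {Q : Ω → ℂ}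
    (hq : ∀ i, q (b i) = Q i • b i) (hQ : ∀ i, Q i ≠ 0) : IG (Mdl q) := by
  classical
  intro J hJc hJ T hT
  have h1 : ∑ i, mkO (cp b i) 0 (cp b i) = 1 := by
    have h2 : ∑ i, cp b i = 1 := basis_ext b fun j => by
      simp [sum_apply, cp_apply, bb_ite b]
    have h3 : ∀ s : Finset Ω, ∑ i ∈ s, mkO (cp b i) 0 (cp b i)
        = mkO (∑ i ∈ s, cp b i) 0 (∑ i ∈ s, cp b i) := by
      intro s
      induction s using Finset.induction_on with
      | empty => simp [mkO_zero]
      | insert i s hi ih => rw [Finset.sum_insert hi, Finset.sum_insert hi, ih, mkO_add]; simp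
    rw [h3, h2, mkO_one]
  have : T = ∑ i, mkO (cp b i) 0 (cp b i) * T := by rw [← Finset.sum_mul, h1, one_mul]
  rw [this]
  exact sum_mem fun i _ => left_cp b hq hQ hJ hT i

theorem ent_ext {Ω : Type*} (b : HilbertBasis Ω ℂ K) {S T : K →L[ℂ] K}
    (h : ∀ i j, (inner ℂ (b i) (S (b j)) : ℂ) = inner ℂ (b i) (T (b j))) : S = T := by
  refine basis_ext b fun j => ?_
  apply b.repr.injective
  ext i
  rw [b.repr_apply_apply, b.repr_apply_apply, h]

theorem ent_bound {Ω : Type*} (b : HilbertBasis Ω ℂ K) (T : K →L[ℂ] K) (i j : Ω) :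
    ‖(inner ℂ (b i) (T (b j)) : ℂ)‖ ≤ ‖T‖ := by
  refine (norm_inner_le_norm _ _).trans ?_
  rw [b.orthonormal.1, one_mul]
  refine (T.le_opNorm _).trans ?_
  rw [b.orthonormal.1, mul_one]

variable [CompleteSpace K]

theorem exists_diag {Ω : Type*} (b : HilbertBasis Ω ℂ K) (d : Ω → ℂ) (C : ℝ) (hC : 0 ≤ C)
    (h : ∀ i, ‖d i‖ ≤ C) : ∃ W : K →L[ℂ] K, (∀ i, W (b i) = d i • b i) ∧ ‖W‖ ≤ C :=
  exists_wm b b id d C hC h Function.injective_id.injOn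

theorem diag_comm {Ω : Type*} (b : HilbertBasis Ω ℂ K) {q W : K →L[ℂ] K} {Q d : Ω → ℂ}
    (hq : ∀ i, q (b i) = Q i • b i) (hW : ∀ i, W (b i) = d i • b i) : W * q = q * W :=
  basis_ext b fun i => by simp [hq, hW, smul_smul, mul_comm]

theorem diag_mem {Ω : Type*} (b : HilbertBasis Ω ℂ K) {q : K →L[ℂ] K} {Q : Ω → ℂ}
    (hq : ∀ i, q (b i) = Q i • b i)
    {J : NonUnitalSubalgebra ℂ ((K × K) →L[ℂ] (K × K))}
    (hJc : IsClosed (J : Set ((K × K) →L[ℂ] (K × K))))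
    (hJ : ∀ e ∈ Mdl q, e * e = e → e ∈ J) {W : K →L[ℂ] K} {d : Ω → ℂ}
    (hW : ∀ i, W (b i) = d i • b i) : mkO W 0 W ∈ J := by
  classical
  have hd : ∀ i, ‖d i‖ ≤ ‖W‖ := by
    intro i
    have := W.le_opNorm (b i)
    rw [hW, norm_smul, b.orthonormal.1] at this
    simpa using this
  rw [← SetLike.mem_coe, ← hJc.closure_eq]
  refine (Metric.mem_closure_iff (α := (K × K) →L[ℂ] (K × K))).2 ?_
  intro ε hε
  have hcp := isCompact_closedBall (0 : ℂ) ‖W‖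
  obtain ⟨t, -, htf, ht⟩ := hcp.finite_cover_balls (half_pos hε)
  have : ∀ i, ∃ c ∈ t, ‖d i - c‖ ≤ ε / 2 := by
    intro i
    have := ht (show d i ∈ Metric.closedBall 0 ‖W‖ by simpa using hd i)
    simp only [Set.mem_iUnion] at this
    obtain ⟨c, hc, h⟩ := this
    exact ⟨c, hc, by rw [← dist_eq_norm]; exact (Metric.mem_ball.1 h).le⟩
  choose d' hd't hd' using this
  choose P hP hPn using fun c : ℂ => exists_diag b (fun i => if d' i = c then 1 else 0) 1
    zero_le_one (fun i => by split_ifs <;> simp)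
  obtain ⟨R, hR, hRn⟩ := exists_diag b (fun i => d i - d' i) (ε / 2) (by positivity) hd'
  have hPJ : ∀ c, mkO (P c) 0 (P c) ∈ J := by
    intro c
    apply hJ _ (mkO_comm_mem (diag_comm b hq (hP c)))
    have : P c * P c = P c := basis_ext b fun i => by
      simp only [mul_apply_eq_comp, hP, map_smul, smul_smul]
      split_ifs <;> simp
    rw [mkO_mul, this]; simp
  refine ⟨mkO (W - R) 0 (W - R), ?_, ?_⟩
  · have h1 : W - R = ∑ c ∈ htf.toFinset, c • P c := basis_ext b fun i => by
      simp only [sub_apply, hW, hR, sum_apply,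
        smul_apply, hP, smul_smul, ← Finset.sum_smul, ← sub_smul]
      simp [hd't]
    have h3 : ∀ s : Finset ℂ, mkO (∑ i ∈ s, i • P i) 0 (∑ i ∈ s, i • P i) ∈ J := by
      intro s
      induction s using Finset.induction_on with
      | empty => simp [mkO_zero]
      | insert i s hi ih =>
        have := add_mem (SMulMemClass.smul_mem i (hPJ i)) ih
        rw [mkO_smul, mkO_add] at this
        rw [Finset.sum_insert hi]
        simpa using this
    rw [h1]; exact h3 _
  · refine lt_of_eq_of_lt (dist_eq_norm (E := (K × K) →L[ℂ] (K × K)) _ _) ?_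
    rw [mkO_sub]
    simp only [sub_sub_cancel, sub_self]
    exact ((norm_mkO R).trans hRn).trans_lt (by linarith)

theorem schur (b : HilbertBasis ℕ ℂ K) (y : ℕ → ℕ → ℂ) (C : ℝ) (hC : 0 ≤ C)
    (hy : ∀ i j, j ≤ i → ‖y i j‖ ≤ C * (1 / 2) ^ (i - j)) :
    ∃ Y : K →L[ℂ] K, ∀ i j, (inner ℂ (b i) (Y (b j)) : ℂ) = if j ≤ i then y i j else 0 := by
  choose W hW hWn using fun d : ℕ => exists_wm b b (fun j => j + d) (fun j => y (j + d) j)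
    (C * (1 / 2) ^ d) (by positivity) (fun j => by simpa using hy (j + d) j (by omega))
    (fun x _ y _ h => by simpa using h)
  have hs : Summable W := by
    refine Summable.of_norm_bounded (g := fun d => C * (1 / 2) ^ d) ?_ hWn
    exact (summable_geometric_of_lt_one (by norm_num) (by norm_num)).mul_left C
  refine ⟨∑' d, W d, fun i j => ?_⟩
  let φ : (K →L[ℂ] K) →L[ℂ] ℂ := (innerSL ℂ (b i)) ∘L (ContinuousLinearMap.apply ℂ K (b j))
  have h1 : (inner ℂ (b i) ((∑' d, W d) (b j)) : ℂ) = φ (∑' d, W d) := rfl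
  rw [h1, φ.map_tsum hs]
  have h2 : ∀ d, φ (W d) = if i = j + d then y (j + d) j else 0 := by
    intro d
    have : φ (W d) = inner ℂ (b i) (W d (b j)) := rfl
    rw [this, hW, inner_smul_right, bb_ite b]
    split_ifs <;> simp
  simp only [h2]
  split_ifs with h
  · rw [tsum_eq_single (i - j)]
    · rw [if_pos (by omega), show j + (i - j) = i by omega]
    · intro d hd
      rw [if_neg (by omega)]
  · have : ∀ d, (if i = j + d then y (j + d) j else 0) = 0 := fun d => if_neg (by omega)
    simp [this]

theorem schur_up (b : HilbertBasis ℕ ℂ K) (y : ℕ → ℕ → ℂ) (C : ℝ) (hC : 0 ≤ C)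
    (hy : ∀ i j, i ≤ j → ‖y i j‖ ≤ C * (1 / 2) ^ (j - i)) :
    ∃ Y : K →L[ℂ] K, ∀ i j, (inner ℂ (b i) (Y (b j)) : ℂ) = if i ≤ j then y i j else 0 := by
  obtain ⟨Y, hY⟩ := schur b (fun i j => (starRingEnd ℂ) (y j i)) C hC (fun i j h => by
    simpa using hy j i h)
  refine ⟨ContinuousLinearMap.adjoint Y, fun i j => ?_⟩
  rw [ContinuousLinearMap.adjoint_inner_right, ← inner_conj_symm, hY]
  split_ifs <;> simp

end Model

set_option linter.unusedSimpArgs false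
set_option linter.unusedVariables false
set_option linter.unusedSectionVars false

section Model2

variable {K : Type*} [NormedAddCommGroup K] [InnerProductSpace ℂ K] [CompleteSpace K]

theorem Q_dec {Q : ℕ → ℝ} (hQ2 : ∀ i, Q (i + 1) ≤ Q i / 2) {i j : ℕ} (h : j ≤ i) :
    Q i ≤ Q j * (1 / 2) ^ (i - j) := by
  obtain ⟨d, rfl⟩ := Nat.exists_eq_add_of_le h
  rw [Nat.add_sub_cancel_left]
  clear h
  induction d with
  | zero => simp
  | succ d ih =>
    have := hQ2 (j + d)
    rw [← add_assoc, pow_succ]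
    linarith

/-- shifts through parity -/
theorem parity_ideal (b : HilbertBasis ℕ ℂ K) {q : K →L[ℂ] K} {Q : ℕ → ℂ}
    (hq : ∀ i, q (b i) = Q i • b i)
    {J : NonUnitalSubalgebra ℂ ((K × K) →L[ℂ] (K × K))}
    (hJ : ∀ e ∈ Mdl q, e * e = e → e ∈ J) {u v : K →L[ℂ] K} {α β : ℕ → ℂ} {σ : ℕ → ℕ}
    (hσ : ∀ i, α i ≠ 0 ∨ β i ≠ 0 → (Even (σ i) ↔ ¬ Even i))
    (hu : ∀ i, u (b i) = α i • b (σ i)) (hv : ∀ i, v (b i) = β i • b (σ i))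
    (huv : mkO u 0 v ∈ Mdl q) {A C : (K × K) →L[ℂ] (K × K)} (hA : A ∈ Mdl q) (hC : C ∈ Mdl q) :
    A * mkO u 0 v * C ∈ J := by
  classical
  obtain ⟨e, he, -⟩ := exists_diag b (fun i => if Even i then 1 else 0) 1
    zero_le_one (fun i => by split_ifs <;> simp)
  have hee : e * e = e := basis_ext b fun i => by
    simp only [mul_apply_eq_comp, he, map_smul, smul_smul]
    split_ifs <;> simp
  have key : ∀ (x : K →L[ℂ] K) (γ : ℕ → ℂ), (∀ i, x (b i) = γ i • b (σ i)) →
      (∀ i, γ i ≠ 0 → (Even (σ i) ↔ ¬ Even i)) → e * x * e = 0 ∧ (1 - e) * x * (1 - e) = 0 := by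
    intro x γ hx hγ
    refine ⟨basis_ext b fun i => ?_, basis_ext b fun i => ?_⟩
    · by_cases h0 : γ i = 0
      · by_cases hi : Even i <;> simp [he, hx, h0, hi]
      · have := hγ i h0
        by_cases hi : Even i
        · simp [he, hx, hi, this]
        · simp [he, hx, hi, this]
    · by_cases h0 : γ i = 0
      · by_cases hi : Even i <;> simp [he, hx, h0, hi]
      · have := hγ i h0
        by_cases hi : Even i
        · simp [he, hx, hi, this]
        · simp [he, hx, hi, this]
  obtain ⟨u1, u2⟩ := key u α hu (fun i h => hσ i (Or.inl h))
  obtain ⟨v1, v2⟩ := key v β hv (fun i h => hσ i (Or.inr h))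
  refine abs2 hJ (e := mkO e 0 e) (mkO_comm_mem (diag_comm b hq he)) huv hA hC ?_ ?_ ?_
  · rw [mkO_mul, hee]; simp
  · rw [mkO_mul, mkO_mul, u1, v1]; simp [mkO_zero]
  · rw [← mkO_one, mkO_sub, mkO_mul, mkO_mul, u2, v2]; simp [mkO_zero]

theorem IG_inf (b : HilbertBasis ℕ ℂ K) {q : K →L[ℂ] K} {Q : ℕ → ℝ}
    (hq : ∀ i, q (b i) = (Q i : ℂ) • b i) (hQ : ∀ i, 0 < Q i) (hQ2 : ∀ i, Q (i + 1) ≤ Q i / 2) :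
    IG (Mdl q) := by
  classical
  intro J hJc hJ T hT
  have hQne : ∀ i, (Q i : ℂ) ≠ 0 := fun i => by exact_mod_cast (hQ i).ne'
  have hr : ∀ j, ‖(Q (j + 1) : ℂ) / Q j‖ ≤ 1 := by
    intro j
    rw [norm_div, Complex.norm_real, Complex.norm_real, Real.norm_of_nonneg (hQ _).le,
      Real.norm_of_nonneg (hQ _).le, div_le_one (hQ _)]
    have := hQ2 j; have := hQ j; linarith
  obtain ⟨s, hs, -⟩ := exists_wm b b (fun i => i + 1) (fun _ => 1) 1 zero_le_one (by simp)
    (fun x _ y _ h => by simpa using h)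
  obtain ⟨sq, hsq, -⟩ := exists_wm b b (fun i => i + 1) (fun i => (Q (i + 1) : ℂ) / Q i) 1
    zero_le_one hr (fun x _ y _ h => by simpa using h)
  have hinj : ∀ f : ℕ → ℂ, Set.InjOn (fun i : ℕ => i - 1) {i | (if i = 0 then 0 else f i) ≠ 0} := by
    intro f x hx y hy h
    have hx' : x ≠ 0 := fun h => hx (by simp [h])
    have hy' : y ≠ 0 := fun h => hy (by simp [h])
    simp only at h
    omega
  obtain ⟨s', hs', -⟩ := exists_wm b b (fun i => i - 1) (fun i => if i = 0 then 0 else 1) 1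
    zero_le_one (fun i => by split_ifs <;> simp) (hinj _)
  obtain ⟨t, ht, -⟩ := exists_wm b b (fun i => i - 1)
    (fun i => if i = 0 then 0 else (Q i : ℂ) / Q (i - 1)) 1
    zero_le_one (fun i => by
      split_ifs with h
      · simp
      · obtain ⟨j, rfl⟩ := Nat.exists_eq_succ_of_ne_zero h
        exact hr j) (hinj _)
  have hs'0 : s' (b 0) = 0 := by simp [hs']
  have hs'1 : ∀ i, s' (b (i + 1)) = b i := fun i => by simp [hs']
  have ht0 : t (b 0) = 0 := by simp [ht]
  have ht1 : ∀ i, t (b (i + 1)) = ((Q (i + 1) : ℂ) / Q i) • b i := fun i => by simp [ht]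
  have hs1 : ∀ i, s (b i) = b (i + 1) := fun i => by simp [hs]
  have hst : mkO s 0 sq ∈ Mdl q := by
    rw [mkO_mem]
    refine basis_ext b fun i => ?_
    have := hQne i
    simp only [mul_apply_eq_comp, hq, hsq, hs1, map_smul, smul_smul, mul_zero, zero_mul, add_zero]
    congr 1
    field_simp
  have htt : mkO t 0 s' ∈ Mdl q := by
    rw [mkO_mem]
    refine basis_ext b fun i => ?_
    rcases i with _ | i
    · simp [hq, hs'0, ht0]
    · have := hQne i
      simp only [mul_apply_eq_comp, hq, hs'1, ht1, map_smul, smul_smul, mul_zero, zero_mul, add_zero]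
      congr 1
      field_simp
  have Is : ∀ {A C}, A ∈ Mdl q → C ∈ Mdl q → A * mkO s 0 sq * C ∈ J := fun hA hC =>
    parity_ideal b hq hJ (fun i _ => by simp [Nat.even_add_one]) hs hsq hst hA hC
  have It : ∀ {A C}, A ∈ Mdl q → C ∈ Mdl q → A * mkO t 0 s' * C ∈ J := fun hA hC =>
    parity_ideal b hq hJ (fun i hi => by
      rcases i with _ | i
      · simp at hi
      · simp [Nat.even_add_one]) ht hs' htt hA hC
  obtain ⟨a, B, D, rfl, hD⟩ := exists_mkO hT
  -- second summand
  have hBmem : ∀ B : K →L[ℂ] K, mkO 0 B (q * B) ∈ Mdl q := fun B => mkO_mem.2 (by simp)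
  have hs's : s' * s = 1 := basis_ext b fun i => by simp [hs1, hs'1]
  have hss' : s * s' = 1 - cp b 0 := basis_ext b fun i => by
    rcases i with _ | i
    · simp [hs'0, cp_apply, bb_ite b, b.orthonormal.1]
    · simp [hs'1, hs1, cp_apply, bb_ite b]
  have hqs : sq * q = q * s := by
    have := mkO_mem.1 hst
    simpa using this
  have hqt : s' * q = q * t := by
    have := mkO_mem.1 htt
    simpa using this
  have h2 : mkO 0 B (q * B) ∈ J := by
    have e1 : mkO 0 B (q * B) = 1 * mkO s 0 sq * mkO 0 (s' * B) (q * (s' * B))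
        + mkO (cp b 0) 0 (cp b 0) * mkO 0 B (q * B) := by
      rw [one_mul, mkO_mul, mkO_mul, mkO_add]
      simp only [mul_zero, zero_mul, add_zero, zero_add]
      rw [← mul_assoc s, hss', ← mul_assoc sq, hqs, mul_assoc q s, ← mul_assoc s, hss',
        ← mul_assoc (cp b 0) q, (cp_comm b hq 0).1, ← (cp_comm b hq 0).2, mul_assoc q]
      congr 1 <;> noncomm_ring
    rw [e1]
    exact add_mem (Is (Subalgebra.one_mem _) (hBmem _)) (left_cp b hq hQne hJ (hBmem B) 0)
  -- first summand
  set D0 := D - q * B with hD0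
  have hD0q : D0 * q = q * a := by rw [hD0, sub_mul, hD]; noncomm_ring
  have hent : ∀ i j, (inner ℂ (b i) (D0 (b j)) : ℂ) * Q j = Q i * inner ℂ (b i) (a (b j)) := by
    intro i j
    have := congrArg (fun T : K →L[ℂ] K => (inner ℂ (b i) (T (b j)) : ℂ)) hD0q
    simp [inner_diag b hq, hq, inner_smul_right] at this
    rw [← this]; ring
  have h1 : mkO a 0 D0 ∈ J := by
    obtain ⟨δ, hδ, -⟩ := exists_diag b (fun i => (inner ℂ (b i) (a (b i)) : ℂ)) ‖a‖ (norm_nonneg _)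
      (fun i => ent_bound b a i i)
    have hratio : ∀ i j, j ≤ i → ‖(Q i : ℂ) / Q j‖ ≤ (1 / 2) ^ (i - j) := by
      intro i j h
      rw [norm_div, Complex.norm_real, Complex.norm_real, Real.norm_of_nonneg (hQ _).le,
        Real.norm_of_nonneg (hQ _).le, div_le_iff₀ (hQ _), mul_comm]
      exact Q_dec hQ2 h
    obtain ⟨Y, hY⟩ := schur b (fun i j => if j = 0 then 0 else
      (Q i : ℂ) / Q j * inner ℂ (b i) (a (b (j - 1)))) ‖a‖ (norm_nonneg _) (by
        intro i j h
        split_ifs with h0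
        · simp
        · rw [norm_mul, mul_comm]
          gcongr
          · exact ent_bound b a i _
          · exact hratio i j h)
    obtain ⟨X, hX⟩ := schur_up b (fun i j => (Q j : ℂ) / Q i * inner ℂ (b i) (D0 (b (j + 1))))
      ‖D0‖ (norm_nonneg _) (by
        intro i j h
        rw [norm_mul, mul_comm]
        gcongr
        · exact ent_bound b D0 i _
        · exact hratio j i h)
    have hup : ∀ i j, (inner ℂ (b i) ((X * t) (b j)) : ℂ)
        = if i < j then inner ℂ (b i) (a (b j)) else 0 := by
      intro i j
      rcases j with _ | j
      · simp [ht0]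
      · have h1 := hQne i; have h2 := hQne j
        have h3 := hent i (j + 1)
        simp only [mul_apply_eq_comp, ht1, map_smul, inner_smul_right, hX, Nat.lt_succ_iff]
        split_ifs
        · field_simp
          rw [← h3]; ring
        · simp
    have hlow : ∀ i j, (inner ℂ (b i) ((Y * sq) (b j)) : ℂ)
        = if j < i then inner ℂ (b i) (D0 (b j)) else 0 := by
      intro i j
      have h1 := hQne j; have h2 := hQne (j + 1)
      have h3 := hent i j
      simp only [mul_apply_eq_comp, hsq, map_smul, inner_smul_right, hY, Nat.succ_le_iff,
        if_neg (Nat.succ_ne_zero _), Nat.add_sub_cancel]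
      split_ifs
      · field_simp
        rw [← h3]; ring
      · simp
    have hδe : ∀ i j, (inner ℂ (b i) (δ (b j)) : ℂ)
        = if i = j then inner ℂ (b i) (a (b i)) else 0 := by
      intro i j
      rw [hδ, inner_smul_right, bb_ite b]
      split_ifs with h
      · subst h; simp
      · simp
    have hdd : ∀ i, (inner ℂ (b i) (D0 (b i)) : ℂ) = inner ℂ (b i) (a (b i)) := fun i =>
      mul_right_cancel₀ (hQne i) (by rw [hent]; ring)
    set al := a - δ - X * t with hal
    set Du := D0 - δ - Y * sq with hDu
    have hale : ∀ i j, (inner ℂ (b i) (al (b j)) : ℂ)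
        = if j < i then inner ℂ (b i) (a (b j)) else 0 := by
      intro i j
      rw [hal, sub_apply, sub_apply, inner_sub_right, inner_sub_right, hup, hδe]
      rcases lt_trichotomy i j with h | h | h
      · rw [if_neg h.ne, if_pos h, if_neg h.not_gt]; ring
      · subst h; simp
      · rw [if_neg h.ne', if_neg h.not_gt, if_pos h]; ring
    have hDue : ∀ i j, (inner ℂ (b i) (Du (b j)) : ℂ)
        = if i < j then inner ℂ (b i) (D0 (b j)) else 0 := by
      intro i j
      rw [hDu, sub_apply, sub_apply, inner_sub_right, inner_sub_right, hlow, hδe]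
      rcases lt_trichotomy i j with h | h | h
      · rw [if_neg h.ne, if_pos h, if_neg h.not_gt]; ring
      · subst h; simp [hdd]
      · rw [if_neg h.ne', if_neg h.not_gt, if_pos h]; ring
    have m1 : mkO (al * s') 0 Y ∈ Mdl q := by
      rw [mkO_mem]
      refine ent_ext b fun i j => ?_
      rcases j with _ | j
      · simp [hs'0, hq, inner_smul_right, hY]
      · have h2 := hQne (j + 1)
        simp only [mul_apply_eq_comp, hs'1, hq, map_smul, inner_smul_right, hY, mul_zero, zero_mul,
          add_zero, inner_diag b hq, hale, Nat.succ_le_iff,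
          if_neg (Nat.succ_ne_zero _), Nat.add_sub_cancel]
        split_ifs
        · field_simp
        · simp
    have m2 : mkO X 0 (Du * s) ∈ Mdl q := by
      rw [mkO_mem]
      refine ent_ext b fun i j => ?_
      have h2 := hQne i
      simp only [mul_apply_eq_comp, hs1, hq, map_smul, inner_smul_right, hX, mul_zero, zero_mul,
          add_zero, inner_diag b hq, hDue, Nat.lt_succ_iff]
      split_ifs
      · field_simp
      · simp
    have hDss : Du * s * s' = Du := by
      refine ent_ext b fun i j => ?_
      rcases j with _ | j
      · rw [hDue]; simp [hs'0]
      · simp [hs'1, hs1]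
    have e1 : mkO a 0 D0 = mkO δ 0 δ + mkO (al * s') 0 Y * mkO s 0 sq * 1
        + mkO X 0 (Du * s) * mkO t 0 s' * 1 := by
      rw [mul_one, mul_one, mkO_mul, mkO_mul, mkO_add, mkO_add, mul_assoc al, hs's, hDss, hal, hDu]
      congr 1
      · noncomm_ring
      · simp
      · noncomm_ring
    rw [e1]
    exact add_mem (add_mem (diag_mem b hq hJc hJ hδ) (Is m1 (Subalgebra.one_mem _)))
      (It m2 (Subalgebra.one_mem _))
  have := add_mem h1 h2
  rw [mkO_add] at this
  simpa [hD0] using this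

theorem exists_reindex {Ω Ω' : Type*} (b : HilbertBasis Ω ℂ K) (e : Ω ≃ Ω') :
    ∃ c : HilbertBasis Ω' ℂ K, ∀ i, c i = b (e.symm i) := by
  have ho : Orthonormal ℂ (fun i => b (e.symm i)) := b.orthonormal.comp _ e.symm.injective
  have hr : Set.range (fun i => b (e.symm i)) = Set.range b := e.symm.surjective.range_comp b
  refine ⟨HilbertBasis.mk ho ?_, fun i => by rw [HilbertBasis.coe_mk]⟩
  rw [hr, b.dense_span]

theorem IG_inj {Ω : Type*} (b : HilbertBasis Ω ℂ K) {q : K →L[ℂ] K} (k : Ω → ℕ)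
    (hk : Function.Injective k)
    (hq : ∀ i, q (b i) = (((1 / 2 : ℝ) ^ k i : ℝ) : ℂ) • b i) : IG (Mdl q) := by
  rcases finite_or_infinite Ω with h | h
  · have := Fintype.ofFinite Ω
    exact IG_fin b hq (fun i => by
      have : (0 : ℝ) < (1 / 2) ^ k i := by positivity
      exact_mod_cast this.ne')
  · have hinf : (Set.range k).Infinite := Set.infinite_range_of_injective hk
    have := hinf.to_subtype
    classical
    let o := Nat.Subtype.orderIsoOfNat (Set.range k)
    let e : Ω ≃ ℕ := (Equiv.ofInjective k hk).trans o.toEquiv.symm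
    have hke : ∀ i, k (e.symm i) = (o i : ℕ) := by
      intro i
      have : Equiv.ofInjective k hk (e.symm i) = o i := by simp [e]
      rw [← this]; rfl
    obtain ⟨c, hc⟩ := exists_reindex b e
    refine IG_inf c (Q := fun i => (1 / 2 : ℝ) ^ (o i : ℕ)) ?_ ?_ ?_
    · intro i
      rw [hc, hq, hke]
    · intro i; positivity
    · intro i
      have h1 : (o i : ℕ) < (o (i + 1) : ℕ) := o.strictMono (Nat.lt_succ_self i)
      calc (1 / 2 : ℝ) ^ (o (i + 1) : ℕ) ≤ (1 / 2 : ℝ) ^ ((o i : ℕ) + 1) :=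
            pow_le_pow_of_le_one (by norm_num) (by norm_num) h1
        _ = _ := by rw [pow_succ]; ring

theorem IG_Mdl {Ω : Type*} (b : HilbertBasis Ω ℂ K) {q : K →L[ℂ] K} (k : Ω → ℕ)
    (hq : ∀ i, q (b i) = (((1 / 2 : ℝ) ^ k i : ℝ) : ℂ) • b i) : IG (Mdl q) := by
  classical
  intro J hJc hJ T hT
  obtain ⟨w, w', Λ, hΛ, h1, h2, h3, h4, h5, h6, h7⟩ := halfops' b k
  obtain ⟨c1, c2⟩ := h7 q (fun n => (((1 / 2 : ℝ) ^ n : ℝ) : ℂ)) hq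
  refine abs5 hJ (w := mkO w 0 w) (w' := mkO w' 0 w') (mkO_comm_mem c1) (mkO_comm_mem c2) hT
    (by rw [mkO_mul, h1]; simp [mkO_zero]) (by rw [mkO_mul, mkO_mul, h3]; simp)
    (by rw [mkO_mul, h2]; simp [mkO_zero]) (by rw [mkO_mul, mkO_mul, h4]; simp) ?_
  have ef : 1 - (mkO w 0 w * mkO w' 0 w' + mkO w' 0 w' * mkO w 0 w)
      = mkO (1 - (w * w' + w' * w)) 0 (1 - (w * w' + w' * w)) := by
    rw [mkO_mul, mkO_mul, mkO_add, ← mkO_one, mkO_sub]; simp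
  rw [ef]
  set f := 1 - (w * w' + w' * w) with hf
  let V := lp (fun _ : Λ => ℂ) 2
  let c : HilbertBasis Λ ℂ V := HilbertBasis.ofRepr (LinearIsometryEquiv.refl ℂ V)
  obtain ⟨i, hi, -⟩ := exists_wm c b (fun l : Λ => (l : Ω)) (fun _ => 1) 1 zero_le_one (by simp)
    Subtype.val_injective.injOn
  obtain ⟨p, hp1, hp2, -⟩ := exists_W (u := fun l : Λ => b l) (v := c)
    (b.orthonormal.comp _ Subtype.val_injective) c.orthonormal (fun _ => 1) 1 zero_le_one (by simp)
  obtain ⟨qV, hqV, -⟩ := exists_diag c (fun l => (((1 / 2 : ℝ) ^ k l : ℝ) : ℂ)) 1 zero_le_one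
    (fun l => by
      rw [Complex.norm_real, Real.norm_of_nonneg (by positivity)]
      exact pow_le_one₀ (by norm_num) (by norm_num))
  have hIG : IG (Mdl qV) := IG_inj c (fun l : Λ => k l)
    (fun x y h => Subtype.ext (hΛ x.2 y.2 h)) hqV
  simp only [one_smul] at hi hp1
  have hp0 : ∀ ω, ω ∉ Λ → p (b ω) = 0 := fun ω hω => hp2 _ fun l => b.orthonormal.2 (by
    rintro rfl; exact hω l.2)
  have hpi : ∀ v, p (i v) = v := by
    have : p ∘L i = ContinuousLinearMap.id ℂ V := basis_ext c fun l => by simp [hi, hp1]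
    exact fun v => congrArg (fun T : V →L[ℂ] V => T v) this
  have hip : ∀ x, i (p x) = f x := by
    have : i ∘L p = f := basis_ext b fun ω => by
      by_cases hω : ω ∈ Λ
      · rw [h5 ω hω]
        simp [hp1 ⟨ω, hω⟩, hi]
      · rw [h6 ω hω]; simp [hp0 ω hω]
    exact fun v => congrArg (fun T : K →L[ℂ] K => T v) this
  have hiq : ∀ v, i (qV v) = q (i v) := by
    have : i ∘L qV = q ∘L i := basis_ext c fun l => by simp [hqV, hi, hq]
    exact fun v => congrArg (fun T : V →L[ℂ] K => T v) this
  have hpq : ∀ v, p (q v) = qV (p v) := by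
    have : p ∘L q = qV ∘L p := basis_ext b fun ω => by
      by_cases hω : ω ∈ Λ
      · simp [hp1 ⟨ω, hω⟩, hqV, hq]
      · simp [hp0 ω hω, hq]
    exact fun v => congrArg (fun T : K →L[ℂ] V => T v) this
  have main := IG_transport hIG (i.prodMap i) (p.prodMap p) (fun v => Prod.ext (hpi v.1) (hpi v.2)) (S' := Mdl q)
    (by
      intro x hx
      obtain ⟨x1, x2⟩ := mem_Mdl.1 hx
      refine mem_Mdl.2 ⟨fun z => ?_, fun z => ?_⟩
      · simp [x1]
      · simp [hpq, x2, hiq]) J hJc hJ (p.prodMap p ∘L T ∘L i.prodMap i) (by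
      obtain ⟨x1, x2⟩ := mem_Mdl.1 hT
      refine mem_Mdl.2 ⟨fun z => ?_, fun z => ?_⟩
      · simp [x1]
      · simp [hiq, x2, hpq])
  convert main using 1
  refine ContinuousLinearMap.ext fun z => ?_
  simp [mkO_apply, hip, Prod.map]

end Model2

set_option linter.unusedSimpArgs false
set_option linter.unusedVariables false
set_option linter.unusedSectionVars false

section Spectral

variable {V W : Type*} [NormedAddCommGroup V] [InnerProductSpace ℂ V] [CompleteSpace V]
  [NormedAddCommGroup W] [InnerProductSpace ℂ W] [CompleteSpace W]

theorem SP_ops (g : V →L[ℂ] V) (hg : IsSelfAdjoint g) :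
    ∃ h r : ℝ → (V →L[ℂ] V), (∀ l, 0 ≤ h l ∧ 0 ≤ r l ∧ h l * r l = 0 ∧
      g = ((l : ℂ)) • (1 : V →L[ℂ] V) + h l - r l ∧ g * h l = h l * g) ∧
      ∀ m l, m < l → ∃ u, h l = u * h m := by
  refine ⟨fun l => cfc (fun t : ℝ => max (t - l) 0) g, fun l => cfc (fun t : ℝ => max (l - t) 0) g,
    fun l => ⟨cfc_nonneg fun t _ => le_max_right _ _, cfc_nonneg fun t _ => le_max_right _ _,
      ?_, ?_, ?_⟩, fun m l hml => ⟨cfc (fun t : ℝ => max (t - l) 0 / max (t - m) (l - m)) g, ?_⟩⟩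
  · rw [← cfc_mul _ _ g (by fun_prop) (by fun_prop)]
    rw [← cfc_zero ℝ g]
    congr 1
    funext t
    rcases le_total t l with h | h
    · simp [h]
    · simp [h]
  · have h1 : (l : ℂ) • (1 : V →L[ℂ] V) = cfc (fun _ : ℝ => l) g := by
      rw [cfc_const l g]
      rw [Algebra.algebraMap_eq_smul_one]
      rfl
    rw [h1, ← cfc_add g _ _ (by fun_prop) (by fun_prop), ← cfc_sub _ _ g (by fun_prop) (by fun_prop)]
    conv_lhs => rw [← cfc_id ℝ g]
    congr 1
    funext t
    rcases le_total t l with h | h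
    · simp [h]
    · simp [h]
  · have := cfc_commute_cfc (fun t : ℝ => t) (fun t : ℝ => max (t - l) 0) g
    rw [cfc_id' ℝ g] at this
    exact this
  · have hpos : ∀ t : ℝ, max (t - m) (l - m) ≠ 0 := fun t =>
      (lt_of_lt_of_le (sub_pos.2 hml) (le_max_right _ _)).ne'
    rw [← cfc_mul _ _ g (Continuous.continuousOn (by fun_prop (disch := exact hpos _))) (by fun_prop)]
    show cfc _ g = _
    congr 1
    funext t
    have := hpos t
    rcases le_total t l with h | h
    · simp [h]
    · have h2 : m ≤ t := hml.le.trans h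
      have h3 : t - m ≠ 0 := by linarith
      have h4 : l - m ≤ t - m := by linarith
      rw [max_eq_left h4, max_eq_left (a := t - m) (b := 0) (by linarith)]
      field_simp

theorem SP (G : V →L[ℂ] W) : ∃ E : ℝ → Submodule ℂ V, ∀ l, IsClosed (E l : Set V) ∧
    (∀ x ∈ E l, ‖G x‖ ^ 2 ≤ l * ‖x‖ ^ 2) ∧ (∀ x ∈ (E l)ᗮ, l * ‖x‖ ^ 2 ≤ ‖G x‖ ^ 2) ∧
    (∀ x ∈ E l, ∀ y ∈ (E l)ᗮ, (inner ℂ (G y) (G x) : ℂ) = 0) ∧ ∀ m, m < l → E m ≤ E l := by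
  set g : V →L[ℂ] V := G.adjoint ∘L G with hgdef
  have hg : IsSelfAdjoint g := by
    rw [ContinuousLinearMap.isSelfAdjoint_iff', hgdef, ContinuousLinearMap.adjoint_comp,
      ContinuousLinearMap.adjoint_adjoint]
  have hgi : ∀ x y, (inner ℂ x (g y) : ℂ) = inner ℂ (G x) (G y) := fun x y => by
    simp [hgdef, ContinuousLinearMap.adjoint_inner_right]
  have hgn : ∀ x, ‖G x‖ ^ 2 = (inner ℂ x (g x) : ℂ).re := fun x => by
    rw [hgi, inner_self_eq_norm_sq_to_K]; norm_cast
  obtain ⟨h, r, h1, h2⟩ := SP_ops g hg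
  have hdec : ∀ l x, ‖G x‖ ^ 2 = l * ‖x‖ ^ 2 + (inner ℂ x (h l x) : ℂ).re
      - (inner ℂ x (r l x) : ℂ).re := by
    intro l x
    have e := congrArg (fun T : V →L[ℂ] V => (inner ℂ x (T x) : ℂ).re) (h1 l).2.2.2.1
    rw [hgn]
    rw [e]
    simp only [sub_apply, add_apply, smul_apply, one_apply_eq_self, inner_sub_right, inner_add_right,
      inner_smul_right, inner_self_eq_norm_sq_to_K, Complex.sub_re, Complex.add_re]
    congr 2
    norm_cast
    exact Complex.re_ofReal_mul _ _
  have hpos : ∀ T : V →L[ℂ] V, 0 ≤ T → ∀ x, 0 ≤ (inner ℂ x (T x) : ℂ).re := fun T hT x =>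
    ((ContinuousLinearMap.nonneg_iff_isPositive T).1 hT).re_inner_nonneg_right x
  refine ⟨fun l => LinearMap.ker (h l : V →ₗ[ℂ] V), fun l => ⟨(h l).isClosed_ker, ?_, ?_, ?_, ?_⟩⟩
  · intro x hx
    have hx' : h l x = 0 := hx
    rw [hdec l, hx', inner_zero_right]
    have := hpos _ (h1 l).2.1 x
    simp; linarith
  · intro x hx
    have hr : r l x = 0 := by
      apply ext_inner_left ℂ
      intro w
      rw [inner_zero_right]
      have hsa : IsSelfAdjoint (r l) := .of_nonneg (h1 l).2.1
      rw [← ContinuousLinearMap.adjoint_inner_left, ContinuousLinearMap.isSelfAdjoint_iff'.1 hsa]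
      refine hx _ ?_
      have := congrArg (fun T : V →L[ℂ] V => T w) (h1 l).2.2.1
      simpa using this
    rw [hdec l, hr, inner_zero_right]
    have := hpos _ (h1 l).1 x
    simp; linarith
  · intro x hx y hy
    have hx' : h l x = 0 := hx
    rw [← hgi]
    have : g x ∈ LinearMap.ker (h l : V →ₗ[ℂ] V) := by
      have := congrArg (fun T : V →L[ℂ] V => T x) (h1 l).2.2.2.2
      simp only [mul_apply_eq_comp, hx', map_zero] at this
      exact this.symm
    rw [← inner_conj_symm, hy _ this, map_zero]
  · intro m hm x hx
    obtain ⟨u, hu⟩ := h2 m l hm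
    have hx' : h m x = 0 := hx
    show h l x = 0
    rw [hu, mul_apply_eq_comp, hx', map_zero]

end Spectral

set_option linter.unusedSimpArgs false
set_option linter.unusedVariables false
set_option linter.unusedSectionVars false

section Spectral2

variable {V W : Type*} [NormedAddCommGroup V] [InnerProductSpace ℂ V] [CompleteSpace V]
  [NormedAddCommGroup W] [InnerProductSpace ℂ W] [CompleteSpace W]

theorem exists_perp {E : Type*} [NormedAddCommGroup E] [InnerProductSpace ℂ E] [CompleteSpace E]
    {U : Submodule ℂ E} (hU : IsClosed (U : Set E)) (x : E) :
    ∃ y ∈ U, ∃ z ∈ Uᗮ, x = y + z := by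
  have : CompleteSpace U := hU.completeSpace_coe
  obtain ⟨y, hy, z, hz, h⟩ := U.exists_add_mem_mem_orthogonal x
  exact ⟨y, hy, z, hz, h⟩

theorem SPEC (G : V →L[ℂ] W) (hinj : ∀ x, G x = 0 → x = 0) (hle : ∀ x, ‖G x‖ ≤ ‖x‖) :
    ∃ F : ℕ → Submodule ℂ V, (∀ k, IsClosed (F k : Set V)) ∧
      (∀ k, ∀ x ∈ F k, ‖G x‖ ≤ (1 / 2) ^ k * ‖x‖ ∧ (1 / 2) ^ (k + 1) * ‖x‖ ≤ ‖G x‖) ∧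
      (∀ j k, j ≠ k → ∀ x ∈ F j, ∀ y ∈ F k, (inner ℂ x y : ℂ) = 0 ∧ (inner ℂ (G x) (G y) : ℂ) = 0) ∧
      ∀ x, (∀ k, x ∈ (F k)ᗮ) → x = 0 := by
  obtain ⟨E', hE'⟩ := SP G
  let E : ℕ → Submodule ℂ V := fun k => if k = 0 then ⊤ else E' ((1 / 4) ^ k)
  have hEc : ∀ k, IsClosed (E k : Set V) := by
    intro k
    by_cases hk : k = 0
    · simp [E, hk]
    · simpa [E, hk] using (hE' _).1
  have hEu : ∀ k, ∀ x ∈ E k, ‖G x‖ ≤ (1 / 2) ^ k * ‖x‖ := by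
    intro k x hx
    by_cases hk : k = 0
    · simpa [hk] using hle x
    · simp only [E, hk, if_false] at hx
      have := (hE' _).2.1 x hx
      refine le_of_sq_le_sq ?_ (by positivity)
      rw [mul_pow, ← pow_mul, mul_comm k, pow_mul]
      norm_num at this ⊢
      exact this
  have hEl : ∀ k, ∀ x ∈ (E (k + 1))ᗮ, (1 / 2) ^ (k + 1) * ‖x‖ ≤ ‖G x‖ := by
    intro k x hx
    simp only [E, Nat.succ_ne_zero, if_false] at hx
    have := (hE' _).2.2.1 x hx
    refine le_of_sq_le_sq ?_ (by positivity)
    rw [mul_pow, ← pow_mul, mul_comm (k + 1), pow_mul]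
    norm_num at this ⊢
    exact this
  have hEg : ∀ k, ∀ x ∈ E k, ∀ y ∈ (E k)ᗮ, (inner ℂ (G y) (G x) : ℂ) = 0 := by
    intro k x hx y hy
    by_cases hk : k = 0
    · simp only [E, hk, if_true, Submodule.top_orthogonal_eq_bot, Submodule.mem_bot] at hy
      simp [hy]
    · simp only [E, hk, if_false] at hx hy
      exact (hE' _).2.2.2.1 x hx y hy
  have hEs : ∀ k, E (k + 1) ≤ E k := by
    intro k
    by_cases hk : k = 0
    · simp [E, hk]
    · simp only [E, hk, if_false, Nat.succ_ne_zero]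
      refine (hE' _).2.2.2.2 _ ?_
      rw [pow_succ]
      have : (0 : ℝ) < (1 / 4) ^ k := by positivity
      linarith
  have hEa : Antitone E := antitone_nat_of_succ_le hEs
  have hlt : ∀ j k, j < k → ∀ x ∈ E j ⊓ (E (j + 1))ᗮ, ∀ y ∈ E k ⊓ (E (k + 1))ᗮ,
      (inner ℂ x y : ℂ) = 0 ∧ (inner ℂ (G x) (G y) : ℂ) = 0 := by
    intro j k hjk x hx y hy
    have hy' : y ∈ E (j + 1) := hEa hjk hy.1
    exact ⟨by rw [← inner_conj_symm, hx.2 y hy', map_zero], hEg _ y hy' x hx.2⟩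
  refine ⟨fun k => E k ⊓ (E (k + 1))ᗮ, fun k => (hEc k).inter (Submodule.isClosed_orthogonal _),
    fun k x hx => ⟨hEu k x hx.1, hEl k x hx.2⟩, ?_, ?_⟩
  · intro j k hjk x hx y hy
    rcases lt_or_gt_of_ne hjk with h | h
    · exact hlt j k h x hx y hy
    · obtain ⟨h1, h2⟩ := hlt k j h y hy x hx
      exact ⟨by rw [← inner_conj_symm, h1, map_zero], by rw [← inner_conj_symm, h2, map_zero]⟩
  · intro x hx
    have hall : ∀ k, x ∈ E k := by
      intro k
      induction k with
      | zero => simp [E]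
      | succ k ih =>
        obtain ⟨y, hy, z, hz, e⟩ := exists_perp (hEc (k + 1)) x
        have hzE : z ∈ E k := by
          have : z = x - y := by rw [e]; abel
          rw [this]; exact sub_mem ih (hEs k hy)
        have h1 := hx k z ⟨hzE, hz⟩
        rw [e, inner_add_right, ← inner_conj_symm, hz y hy, map_zero, zero_add] at h1
        have : z = 0 := inner_self_eq_zero.1 h1
        rw [e, this, add_zero]; exact hy
    apply hinj
    have h1 : ∀ k, ‖G x‖ ≤ (1 / 2 : ℝ) ^ k * ‖x‖ := fun k => hEu k x (hall k)
    have h2 : Filter.Tendsto (fun k : ℕ => (1 / 2 : ℝ) ^ k * ‖x‖) Filter.atTop (𝓝 (0 * ‖x‖)) :=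
      (tendsto_pow_atTop_nhds_zero_of_lt_one (by norm_num) (by norm_num)).mul_const _
    rw [zero_mul] at h2
    exact norm_le_zero_iff.1 (ge_of_tendsto' h2 h1)

theorem pyth {E : Type*} [NormedAddCommGroup E] [InnerProductSpace ℂ E] (f : ℕ → E)
    (h : ∀ i j, i ≠ j → (inner ℂ (f i) (f j) : ℂ) = 0) (s : Finset ℕ) :
    ‖∑ i ∈ s, f i‖ ^ 2 = ∑ i ∈ s, ‖f i‖ ^ 2 := by
  classical
  induction s using Finset.induction_on with
  | empty => simp
  | insert a s ha ih =>
    rw [Finset.sum_insert ha, Finset.sum_insert ha, ← ih, @norm_add_sq ℂ, inner_sum,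
      Finset.sum_eq_zero (fun i hi => h a i (by rintro rfl; exact ha hi))]
    simp

theorem SPECB (G : V →L[ℂ] W) (hinj : ∀ x, G x = 0 → x = 0) (hle : ∀ x, ‖G x‖ ≤ ‖x‖) :
    ∃ D : V →L[ℂ] V, ∃ Gt : V →L[ℂ] W, IG (Mdl D) ∧ (∀ x, Gt (D x) = G x) ∧
      (∀ z, 1 / 2 * ‖z‖ ≤ ‖Gt z‖) ∧ (∀ z, Gt z ∈ closure (Set.range G)) := by
  obtain ⟨F, hFc, hFb, hFo, hFd⟩ := SPEC G hinj hle
  have : ∀ k, CompleteSpace (F k) := fun k => (hFc k).completeSpace_coe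
  choose w bk hbk using fun k => exists_hilbertBasis ℂ (F k)
  have hOF : OrthogonalFamily ℂ (fun k => F k) (fun k => (F k).subtypeₗᵢ) := by
    intro i j hij x y
    exact (hFo i j hij x x.2 y y.2).1
  have hOrt := hOF.orthonormal_sigma_orthonormal (fun k => (bk k).orthonormal)
  have hbot : (Submodule.span ℂ (Set.range
      (fun a : Σ k, w k => (F a.1).subtypeₗᵢ (bk a.1 a.2))))ᗮ = ⊥ := by
    rw [Submodule.eq_bot_iff]
    intro x hx
    refine hFd x fun k y hy => ?_
    have : (innerSL ℂ x) ∘L (F k).subtypeL = 0 := basis_ext (bk k) fun i => by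
      have := hx _ (Submodule.subset_span ⟨⟨k, i⟩, rfl⟩)
      simp only [ContinuousLinearMap.comp_apply, innerSL_apply_apply, zero_apply]
      exact inner_eq_zero_symm.1 this
    have := congrArg (fun T => T ⟨y, hy⟩) this
    simp only [ContinuousLinearMap.comp_apply, innerSL_apply_apply, zero_apply] at this
    exact inner_eq_zero_symm.1 this
  obtain ⟨b, hb⟩ : ∃ b : HilbertBasis (Σ k, w k) ℂ V, ∀ k i, b ⟨k, i⟩ = (bk k i : V) :=
    ⟨HilbertBasis.mkOfOrthogonalEqBot hOrt hbot, fun k i => by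
      rw [HilbertBasis.coe_mkOfOrthogonalEqBot]; rfl⟩
  obtain ⟨D, hD, -⟩ := exists_diag b (fun a => (((1 / 2 : ℝ) ^ a.1 : ℝ) : ℂ)) 1 zero_le_one
    (fun l => by
      rw [Complex.norm_real, Real.norm_of_nonneg (by positivity)]
      exact pow_le_one₀ (by norm_num) (by norm_num))
  have hIG : IG (Mdl D) := IG_Mdl b (fun a => a.1) hD
  have hDF : ∀ k, ∀ x ∈ F k, D x = (((1 / 2 : ℝ) ^ k : ℝ) : ℂ) • x := by
    intro k x hx
    have : D ∘L (F k).subtypeL = (((1 / 2 : ℝ) ^ k : ℝ) : ℂ) • (F k).subtypeL :=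
      basis_ext (bk k) fun i => by
        have := hD ⟨k, i⟩
        rw [hb] at this
        simpa only [ContinuousLinearMap.comp_apply, smul_apply, Submodule.subtypeL_apply] using this
    exact congrArg (fun T => T ⟨x, hx⟩) this
  have hdense : Dense ((⨆ k, F k : Submodule ℂ V) : Set V) := by
    rw [Submodule.dense_iff_topologicalClosure_eq_top, Submodule.topologicalClosure_eq_top_iff,
      ← Submodule.iInf_orthogonal, Submodule.eq_bot_iff]
    intro x hx
    rw [Submodule.mem_iInf] at hx
    exact hFd x hx
  have hbd : ∀ x, ‖G x‖ ≤ ‖D x‖ ∧ 1 / 2 * ‖D x‖ ≤ ‖G x‖ := by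
    have hcl : IsClosed {x | ‖G x‖ ≤ ‖D x‖ ∧ 1 / 2 * ‖D x‖ ≤ ‖G x‖} :=
      (isClosed_le (f := fun x => ‖G x‖) (g := fun x => ‖D x‖) (by fun_prop) (by fun_prop)).and
        (isClosed_le (f := fun x => 1 / 2 * ‖D x‖) (g := fun x => ‖G x‖) (by fun_prop) (by fun_prop))
    intro x
    refine hcl.closure_subset_iff.2 ?_ (hdense x)
    intro x hx
    obtain ⟨f, hf, rfl⟩ := (Submodule.mem_iSup_iff_exists_finsupp _ _).1 hx
    rw [Finsupp.sum]
    have hG : ‖G (∑ i ∈ f.support, f i)‖ ^ 2 = ∑ i ∈ f.support, ‖G (f i)‖ ^ 2 := by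
      rw [map_sum]
      exact pyth (fun i => G (f i)) (fun i j hij => (hFo i j hij _ (hf i) _ (hf j)).2) _
    have hDn : ∀ i, ‖D (f i)‖ = (1 / 2) ^ i * ‖f i‖ := fun i => by
      rw [hDF i _ (hf i), norm_smul, Complex.norm_real, Real.norm_of_nonneg (by positivity)]
    have hD2 : ‖D (∑ i ∈ f.support, f i)‖ ^ 2 = ∑ i ∈ f.support, ‖D (f i)‖ ^ 2 := by
      rw [map_sum]
      exact pyth (fun i => D (f i)) (fun i j hij => by
        simp only [hDF i _ (hf i), hDF j _ (hf j), inner_smul_left, inner_smul_right,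
          (hFo i j hij _ (hf i) _ (hf j)).1, mul_zero]) _
    constructor
    · refine le_of_sq_le_sq ?_ (norm_nonneg _)
      rw [hG, hD2]
      refine Finset.sum_le_sum fun i _ => pow_le_pow_left₀ (norm_nonneg _) ?_ 2
      rw [hDn]; exact (hFb i _ (hf i)).1
    · refine le_of_sq_le_sq ?_ (norm_nonneg _)
      rw [mul_pow, hG, hD2, Finset.mul_sum]
      refine Finset.sum_le_sum fun i _ => ?_
      rw [← mul_pow]
      refine pow_le_pow_left₀ (by positivity) ?_ 2
      rw [hDn]
      have := (hFb i _ (hf i)).2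
      rw [pow_succ] at this
      linarith
  have hDr : DenseRange (D : V →ₗ[ℂ] V) := by
    have : (⨆ k, F k) ≤ LinearMap.range (D : V →ₗ[ℂ] V) := iSup_le fun k x hx => by
      refine ⟨((((1 / 2 : ℝ) ^ k : ℝ) : ℂ)⁻¹) • x, ?_⟩
      have h0 : ((((1 / 2 : ℝ) ^ k : ℝ) : ℂ)) ≠ 0 := by
        have : (0 : ℝ) < (1 / 2) ^ k := by positivity
        exact_mod_cast this.ne'
      rw [map_smul, ContinuousLinearMap.coe_coe, hDF k x hx, smul_smul, inv_mul_cancel₀ h0, one_smul]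
    exact hdense.mono this
  have hGt := LinearMap.extendOfNorm_eq (f := (G : V →ₗ[ℂ] W)) (e := (D : V →ₗ[ℂ] V)) hDr
    ⟨1, fun x => by simpa using (hbd x).1⟩
  set Gt := LinearMap.extendOfNorm (G : V →ₗ[ℂ] W) (D : V →ₗ[ℂ] V) with hGtd
  refine ⟨D, Gt, hIG, fun x => hGt x, ?_, ?_⟩
  · refine isClosed_property hDr (isClosed_le (by fun_prop) (by fun_prop)) fun x => ?_
    rw [hGt]; exact (hbd x).2
  · refine isClosed_property hDr (isClosed_closure.preimage Gt.continuous) fun x => ?_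
    show Gt _ ∈ _
    rw [hGt]; exact subset_closure ⟨x, rfl⟩

end Spectral2

set_option linter.unusedSimpArgs false
set_option linter.unusedVariables false
set_option linter.unusedSectionVars false

section Final

theorem FIN {H U1 U2 K : Type*} [NormedAddCommGroup H] [InnerProductSpace ℂ H]
    [NormedAddCommGroup U1] [InnerProductSpace ℂ U1] [CompleteSpace U1]
    [NormedAddCommGroup U2] [InnerProductSpace ℂ U2] [CompleteSpace U2]
    [NormedAddCommGroup K] [InnerProductSpace ℂ K] [CompleteSpace K]
    {P N : Submodule ℂ H} {S : Subalgebra ℂ (H →L[ℂ] H)}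
    (hS : ∀ T : H →L[ℂ] H, T ∈ S ↔ (∀ x ∈ P, T x ∈ P) ∧ (∀ x ∈ N, T x ∈ N))
    {D : K →L[ℂ] K} (hD : IG (Mdl D)) (e : ((U1 × U2) × (K × K)) ≃L[ℂ] H)
    (hP : ∀ x, x ∈ P ↔ ∃ m k, x = e ((m, 0), (k, 0)))
    (hN : ∀ x, x ∈ N ↔ ∃ n k, x = e ((0, n), (k, D k))) : IG S := by
  intro J hJc hJ T hT
  let L := (U1 × U2) × (K × K)
  let i1 : U1 →L[ℂ] H := (e : L →L[ℂ] H) ∘L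
    (ContinuousLinearMap.inl ℂ (U1 × U2) (K × K)) ∘L (ContinuousLinearMap.inl ℂ U1 U2)
  let i2 : U2 →L[ℂ] H := (e : L →L[ℂ] H) ∘L
    (ContinuousLinearMap.inl ℂ (U1 × U2) (K × K)) ∘L (ContinuousLinearMap.inr ℂ U1 U2)
  let i3 : (K × K) →L[ℂ] H := (e : L →L[ℂ] H) ∘L (ContinuousLinearMap.inr ℂ (U1 × U2) (K × K))
  let p1 : H →L[ℂ] U1 := (ContinuousLinearMap.fst ℂ U1 U2) ∘L
    (ContinuousLinearMap.fst ℂ (U1 × U2) (K × K)) ∘L (e.symm : H →L[ℂ] L)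
  let p2 : H →L[ℂ] U2 := (ContinuousLinearMap.snd ℂ U1 U2) ∘L
    (ContinuousLinearMap.fst ℂ (U1 × U2) (K × K)) ∘L (e.symm : H →L[ℂ] L)
  let p3 : H →L[ℂ] (K × K) := (ContinuousLinearMap.snd ℂ (U1 × U2) (K × K)) ∘L (e.symm : H →L[ℂ] L)
  have a1 : ∀ v, i1 v = e ((v, 0), 0) := fun v => rfl
  have a2 : ∀ v, i2 v = e ((0, v), 0) := fun v => rfl
  have a3 : ∀ v, i3 v = e (0, v) := fun v => rfl
  have b1 : ∀ v, p1 v = (e.symm v).1.1 := fun v => rfl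
  have b2 : ∀ v, p2 v = (e.symm v).1.2 := fun v => rfl
  have b3 : ∀ v, p3 v = (e.symm v).2 := fun v => rfl
  have c1 : ∀ v, p1 (i1 v) = v := fun v => by simp [a1, b1]
  have c2 : ∀ v, p2 (i2 v) = v := fun v => by simp [a2, b2]
  have c3 : ∀ v, p3 (i3 v) = v := fun v => by simp [a3, b3]
  have m1 : ∀ x ∈ (⊤ : Subalgebra ℂ (U1 →L[ℂ] U1)), i1 ∘L x ∘L p1 ∈ S := by
    intro x _
    refine (hS _).2 ⟨fun y hy => ?_, fun y hy => ?_⟩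
    · obtain ⟨m, k, rfl⟩ := (hP y).1 hy
      exact (hP _).2 ⟨x m, 0, by simp [a1, b1]; rfl⟩
    · obtain ⟨m, k, rfl⟩ := (hN y).1 hy
      exact (hN _).2 ⟨0, 0, by simp [a1, b1]; rfl⟩
  have m2 : ∀ x ∈ (⊤ : Subalgebra ℂ (U2 →L[ℂ] U2)), i2 ∘L x ∘L p2 ∈ S := by
    intro x _
    refine (hS _).2 ⟨fun y hy => ?_, fun y hy => ?_⟩
    · obtain ⟨m, k, rfl⟩ := (hP y).1 hy
      exact (hP _).2 ⟨0, 0, by simp [a2, b2]; rfl⟩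
    · obtain ⟨m, k, rfl⟩ := (hN y).1 hy
      exact (hN _).2 ⟨x m, 0, by simp [a2, b2]; rfl⟩
  have m3 : ∀ x ∈ Mdl D, i3 ∘L x ∘L p3 ∈ S := by
    intro x hx
    obtain ⟨x1, x2⟩ := mem_Mdl.1 hx
    refine (hS _).2 ⟨fun y hy => ?_, fun y hy => ?_⟩
    · obtain ⟨m, k, rfl⟩ := (hP y).1 hy
      refine (hP _).2 ⟨0, (x (k, 0)).1, ?_⟩
      simp only [ContinuousLinearMap.comp_apply, a3, b3, e.symm_apply_apply]
      congr 1
      exact Prod.ext rfl (Prod.ext rfl (x1 k))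
    · obtain ⟨m, k, rfl⟩ := (hN y).1 hy
      refine (hN _).2 ⟨0, (x (k, D k)).1, ?_⟩
      simp only [ContinuousLinearMap.comp_apply, a3, b3, e.symm_apply_apply]
      congr 1
      exact Prod.ext rfl (Prod.ext rfl (x2 k))
  have hsum : i1 ∘L p1 + i2 ∘L p2 + i3 ∘L p3 = 1 := by
    refine ContinuousLinearMap.ext fun x => ?_
    obtain ⟨⟨⟨u, v⟩, w⟩, rfl⟩ := e.surjective x
    simp [a1, a2, a3, b1, b2, b3, ← map_add]
  have gen : ∀ f : H →L[ℂ] H, f ∈ S → f * f = f → f * T * f ∈ J → f * T ∈ J := by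
    intro f h1 h2 h3
    have := add_mem h3 (abs0 hJ h1 hT h2)
    rwa [← mul_add, add_sub_cancel, mul_one] at this
  have g1 : (i1 ∘L p1) * T ∈ J := by
    refine gen _ (by simpa using! m1 1 trivial) (ContinuousLinearMap.ext fun x => by simp [c1]) ?_
    exact IG_transport IG_top i1 p1 c1 m1 J hJc hJ (p1 ∘L T ∘L i1) trivial
  have g2 : (i2 ∘L p2) * T ∈ J := by
    refine gen _ (by simpa using! m2 1 trivial) (ContinuousLinearMap.ext fun x => by simp [c2]) ?_
    exact IG_transport IG_top i2 p2 c2 m2 J hJc hJ (p2 ∘L T ∘L i2) trivial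
  have g3 : (i3 ∘L p3) * T ∈ J := by
    refine gen _ (by simpa using! m3 1 (Subalgebra.one_mem _))
      (ContinuousLinearMap.ext fun x => by simp [c3]) ?_
    refine IG_transport hD i3 p3 c3 m3 J hJc hJ (p3 ∘L T ∘L i3) ?_
    obtain ⟨t1, t2⟩ := (hS T).1 hT
    refine mem_Mdl.2 ⟨fun x => ?_, fun x => ?_⟩
    · obtain ⟨m, k, hk⟩ := (hP _).1 (t1 (e ((0, 0), (x, 0))) ((hP _).2 ⟨0, x, rfl⟩))
      have : T (i3 (x, 0)) = e ((m, 0), (k, 0)) := hk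
      simp [this, b3]
    · obtain ⟨m, k, hk⟩ := (hN _).1 (t2 (e ((0, 0), (x, D x))) ((hN _).2 ⟨0, x, rfl⟩))
      have : T (i3 (x, D x)) = e ((0, m), (k, D k)) := hk
      simp [this, b3]
  have := add_mem (add_mem g1 g2) g3
  rwa [← add_mul, ← add_mul, hsum, one_mul] at this

theorem IG_two {H : Type*} [NormedAddCommGroup H] [InnerProductSpace ℂ H] [CompleteSpace H]
    (P N : Submodule ℂ H) (hMc : IsClosed (P : Set H)) (hNc : IsClosed (N : Set H))
    (hMN : P ⊓ N = ⊥) (hspan : (P ⊔ N).topologicalClosure = ⊤)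
    (S : Subalgebra ℂ (H →L[ℂ] H))
    (hS : ∀ T : H →L[ℂ] H, T ∈ S ↔ (∀ x ∈ P, T x ∈ P) ∧ (∀ x ∈ N, T x ∈ N)) : IG S := by
  have : CompleteSpace P := hMc.completeSpace_coe
  have : CompleteSpace N := hNc.completeSpace_coe
  let π : H →L[ℂ] H := P.starProjection
  have hπm : ∀ x, π x ∈ P := fun x => P.starProjection_apply_mem x
  have hπo : ∀ x, x - π x ∈ Pᗮ := fun x => P.sub_starProjection_mem_orthogonal x
  have hπn : ∀ x, ‖x‖ ^ 2 = ‖π x‖ ^ 2 + ‖x - π x‖ ^ 2 := by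
    intro x
    have h : (inner ℂ (π x) (x - π x) : ℂ) = 0 := hπo x _ (hπm x)
    have := @norm_add_sq ℂ H _ _ _ (π x) (x - π x)
    rw [h] at this
    simpa using this
  have hπid : ∀ x ∈ P, π x = x := fun x hx => Submodule.starProjection_eq_self_iff.2 hx
  -- the operator G on N
  let G : N →L[ℂ] H := (1 - π) ∘L N.subtypeL
  have hG : ∀ x : N, G x = x - π x := fun x => rfl
  obtain ⟨E', hE'⟩ := SP G
  obtain ⟨hEc, hEu, hEl, hEo, -⟩ := hE' (1 / 4)
  set E := E' (1 / 4) with hE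
  have : CompleteSpace E := hEc.completeSpace_coe
  have : CompleteSpace Eᗮ := (Submodule.isClosed_orthogonal E).completeSpace_coe
  let GE : E →L[ℂ] H := G ∘L E.subtypeL
  have hGE : ∀ x : E, GE x = G x := fun x => rfl
  have hEn : ∀ x : E, ‖GE x‖ ≤ 1 / 2 * ‖x‖ := by
    intro x
    refine le_of_sq_le_sq ?_ (by positivity)
    have := hEu x x.2
    rw [hGE, mul_pow]
    norm_num at this ⊢
    exact this
  obtain ⟨D, Gt, hD, hGtD, hGtl, hGtr⟩ := SPECB GE (by
    intro x hx
    have h1 : (x : N) = ((x : N) : H) := rfl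
    have h2 : ((x : N) : H) ∈ P ⊓ N := by
      refine ⟨?_, (x : N).2⟩
      have : ((x : N) : H) - π (x : N) = 0 := hx
      rw [sub_eq_zero.1 this]; exact hπm _
    rw [hMN, Submodule.mem_bot] at h2
    exact Subtype.ext (Subtype.ext h2)) (fun x => (hEn x).trans (by
      have := norm_nonneg x; linarith))
  let A : E →L[ℂ] H := π ∘L N.subtypeL ∘L E.subtypeL
  have hA : ∀ x : E, A x = π (x : N) := fun x => rfl
  have hAl : ∀ x : E, 1 / 2 * ‖x‖ ≤ ‖A x‖ := by
    intro x
    refine le_of_sq_le_sq ?_ (norm_nonneg _)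
    have h1 := hπn (x : N)
    have h2 : ‖GE x‖ ^ 2 ≤ (1 / 2 * ‖x‖) ^ 2 := pow_le_pow_left₀ (norm_nonneg _) (hEn x) 2
    have h3 : ‖((x : N) : H)‖ = ‖x‖ := rfl
    have h4 : GE x = (x : N) - π (x : N) := rfl
    rw [← h4, ← hA, h3] at h1
    rw [mul_pow] at h2 ⊢
    nlinarith [sq_nonneg ‖x‖]
  have hrange : IsClosed (LinearMap.range (A : E →ₗ[ℂ] H) : Set H) := by
    have : AntilipschitzWith 2 A := A.antilipschitz_of_bound (fun x => by
      have := hAl x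
      rw [NNReal.coe_ofNat]; linarith)
    have := this.isClosed_range A.uniformContinuous
    simpa using! this
  set R := LinearMap.range (A : E →ₗ[ℂ] H) with hR
  let M0 : Submodule ℂ H := P ⊓ Rᗮ
  have : CompleteSpace M0 := (hMc.inter (Submodule.isClosed_orthogonal R)).completeSpace_coe
  have hGtP : ∀ z, Gt z ∈ Pᗮ := by
    intro z
    refine closure_minimal ?_ (Submodule.isClosed_orthogonal P) (hGtr z)
    rintro _ ⟨x, rfl⟩
    exact hπo _
  have hGtN : ∀ z, ∀ n ∈ Eᗮ, (inner ℂ (G n) (Gt z) : ℂ) = 0 := by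
    intro z n hn
    have hc : IsClosed {y : H | (inner ℂ (G n) y : ℂ) = 0} :=
      isClosed_eq (by fun_prop) (by fun_prop)
    refine closure_minimal ?_ hc (hGtr z)
    rintro _ ⟨x, rfl⟩
    exact hEo x x.2 n hn
  let Ψ : ((M0 × Eᗮ) × (E × E)) →L[ℂ] H :=
    ContinuousLinearMap.coprod
      (ContinuousLinearMap.coprod M0.subtypeL (N.subtypeL ∘L (Eᗮ).subtypeL))
      (ContinuousLinearMap.coprod A Gt)
  have hΨ : ∀ m n x z, Ψ ((m, n), (x, z)) = ((m : H) + ((n : N) : H)) + (A x + Gt z) := by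
    intro m n x z; simp [Ψ]
  have hbound : ∀ m n x z, ‖((m, n), (x, z))‖ ≤ 3 * ‖Ψ ((m, n), (x, z))‖ := by
    intro m n x z
    have o1 : (inner ℂ ((m : H) + ((n : N) : H)) (A x) : ℂ) = 0 := by
      rw [inner_add_left]
      have e1 : (inner ℂ (m : H) (A x) : ℂ) = 0 := inner_eq_zero_symm.1 (m.2.2 _ ⟨x, rfl⟩)
      have e2 : (inner ℂ ((n : N) : H) (A x) : ℂ) = 0 := by
        have f1 : (inner ℂ ((n : N) : H) ((x : N) : H) : ℂ) = 0 :=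
          inner_eq_zero_symm.1 (n.2 x x.2)
        have f2 : (inner ℂ (G n) (G x) : ℂ) = 0 := hEo x x.2 n n.2
        have f3 : ((x : N) : H) = A x + G x := by rw [hA, hG]; abel
        have f4 : (inner ℂ ((n : N) : H) (G x) : ℂ) = 0 := by
          have : ((n : N) : H) = π (n : N) + G n := by rw [hG]; abel
          rw [this, inner_add_left, f2, add_zero]
          exact hπo _ _ (hπm _)
        rw [f3, inner_add_right, f4, add_zero] at f1
        exact f1
      rw [e1, e2, add_zero]
    have o2 : (inner ℂ ((m : H) + ((n : N) : H)) (Gt z) : ℂ) = 0 := by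
      have : ((n : N) : H) = π (n : N) + G n := by rw [hG]; abel
      rw [inner_add_left, hGtP z _ m.2.1, this, inner_add_left, hGtN z n n.2,
        hGtP z _ (hπm _)]
      simp
    have o3 : (inner ℂ (A x) (Gt z) : ℂ) = 0 := hGtP z _ (hπm _)
    have e1 : ‖Ψ ((m, n), (x, z))‖ ^ 2
        = ‖(m : H) + ((n : N) : H)‖ ^ 2 + (‖A x‖ ^ 2 + ‖Gt z‖ ^ 2) := by
      rw [hΨ, @norm_add_sq ℂ, @norm_add_sq ℂ _ _ _ _ (A x), o3, inner_add_right, o1, o2]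
      simp
    have hu := norm_nonneg (Ψ ((m, n), (x, z)))
    have n1 : ‖(m : H) + ((n : N) : H)‖ ≤ ‖Ψ ((m, n), (x, z))‖ :=
      le_of_sq_le_sq (by nlinarith [sq_nonneg ‖A x‖, sq_nonneg ‖Gt z‖]) hu
    have n2 : ‖A x‖ ≤ ‖Ψ ((m, n), (x, z))‖ :=
      le_of_sq_le_sq (by nlinarith [sq_nonneg ‖(m : H) + ((n : N) : H)‖, sq_nonneg ‖Gt z‖]) hu
    have n3 : ‖Gt z‖ ≤ ‖Ψ ((m, n), (x, z))‖ :=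
      le_of_sq_le_sq (by nlinarith [sq_nonneg ‖(m : H) + ((n : N) : H)‖, sq_nonneg ‖A x‖]) hu
    have n4 : ‖G n‖ ≤ ‖(m : H) + ((n : N) : H)‖ := by
      have h1 := hπn ((m : H) + ((n : N) : H))
      have h2 : (m : H) + ((n : N) : H) - π ((m : H) + ((n : N) : H)) = G n := by
        rw [map_add, hπid _ m.2.1, hG]; abel
      rw [h2] at h1
      refine le_of_sq_le_sq ?_ (norm_nonneg _)
      nlinarith [sq_nonneg ‖π ((m : H) + ((n : N) : H))‖]
    have n5 : 1 / 2 * ‖n‖ ≤ ‖G n‖ := by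
      refine le_of_sq_le_sq ?_ (norm_nonneg _)
      have := hEl n n.2
      rw [mul_pow]
      norm_num at this ⊢
      exact this
    have n6 : ‖m‖ ≤ ‖(m : H) + ((n : N) : H)‖ + ‖n‖ := by
      have : (m : H) = ((m : H) + ((n : N) : H)) - ((n : N) : H) := by abel
      calc ‖m‖ = ‖((m : H) + ((n : N) : H)) - ((n : N) : H)‖ := by rw [← this]; rfl
        _ ≤ _ := norm_sub_le _ _
    have n7 := hAl x
    have n8 := hGtl z
    simp only [Prod.norm_def]
    refine max_le (max_le ?_ ?_) (max_le ?_ ?_) <;> linarith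
  have hanti : AntilipschitzWith 3 Ψ := Ψ.antilipschitz_of_bound (fun x => by
    obtain ⟨⟨m, n⟩, ⟨x, z⟩⟩ := x
    simpa using hbound m n x z)
  have hP : ∀ x, x ∈ P ↔ ∃ m k, x = Ψ ((m, 0), (k, 0)) := by
    intro x
    constructor
    · intro hx
      obtain ⟨y, ⟨k, rfl⟩, w, hw, e⟩ := exists_perp hrange x
      have hAk : A k ∈ P := hπm _
      have hwP : w ∈ P := by
        have : w = x - A k := by rw [e]; simp
        rw [this]; exact sub_mem hx hAk
      refine ⟨⟨w, hwP, hw⟩, k, ?_⟩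
      rw [hΨ, e]
      simp [add_comm]
    · rintro ⟨m, k, rfl⟩
      rw [hΨ]
      simp only [map_zero, add_zero, Submodule.coe_zero, ZeroMemClass.coe_zero]
      exact add_mem m.2.1 (hπm _)
  have hsplit : ∀ k : E, A k + Gt (D k) = ((k : N) : H) := by
    intro k
    rw [hGtD, hGE, hG, hA]; abel
  have hN : ∀ x, x ∈ N ↔ ∃ n k, x = Ψ ((0, n), (k, D k)) := by
    intro x
    constructor
    · intro hx
      obtain ⟨y, hy, z, hz, e⟩ := exists_perp hEc (⟨x, hx⟩ : N)
      refine ⟨⟨z, hz⟩, ⟨y, hy⟩, ?_⟩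
      rw [hΨ, hsplit]
      have := congrArg (fun v : N => (v : H)) e
      simp only [Submodule.coe_add] at this
      simp [this, add_comm]
    · rintro ⟨n, k, rfl⟩
      rw [hΨ, hsplit]
      simp only [map_zero, zero_add, Submodule.coe_zero, ZeroMemClass.coe_zero]
      exact add_mem (n : N).2 (k : N).2
  have hsurj : Function.Surjective Ψ := by
    have hc : IsClosed (LinearMap.range (Ψ : ((M0 × Eᗮ) × (E × E)) →ₗ[ℂ] H) : Set H) := by
      have := hanti.isClosed_range Ψ.uniformContinuous
      simpa using! this
    have hle : (P ⊔ N).topologicalClosure ≤ LinearMap.range (Ψ : ((M0 × Eᗮ) × (E × E)) →ₗ[ℂ] H) := by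
      refine Submodule.topologicalClosure_minimal _ (sup_le ?_ ?_) hc
      · intro x hx
        obtain ⟨m, k, rfl⟩ := (hP x).1 hx
        exact ⟨_, rfl⟩
      · intro x hx
        obtain ⟨m, k, rfl⟩ := (hN x).1 hx
        exact ⟨_, rfl⟩
    rw [hspan] at hle
    intro x
    exact hle (Submodule.mem_top (x := x))
  let e := ContinuousLinearEquiv.ofBijective Ψ (LinearMap.ker_eq_bot.2 hanti.injective)
    (LinearMap.range_eq_top.2 hsurj)
  exact FIN hS hD e hP hN

theorem IG_to_IdemGen {H : Type*} [NormedAddCommGroup H] [InnerProductSpace ℂ H]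
    {S : Subalgebra ℂ (H →L[ℂ] H)} (h : IG S) : IdemGen ↥S := by
  intro J hJc hJ x
  have h1 := h (J.map S.val).topologicalClosure.toNonUnitalSubalgebra
    (Subalgebra.isClosed_topologicalClosure _) (fun e he hee => by
      refine Subalgebra.le_topologicalClosure _ ?_
      exact ⟨⟨e, he⟩, hJ ⟨e, he⟩ (Subtype.ext hee), rfl⟩) x x.2
  have h2 : (x : H →L[ℂ] H) ∈ closure (Subtype.val '' (J : Set S)) := h1
  rw [← closure_subtype, hJc.closure_eq] at h2
  exact h2

end Final

set_option synthInstance.maxHeartbeats 1000000 in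
/-- Let `H` be a complex separable Hilbert space and `ℒ = {0, M, N, H}` a subspace
lattice with two atoms on `H`, with `Alg ℒ` realized as the subalgebra `S ≤ B(H)`.
Then for every Banach `Alg ℒ`-bimodule `X` and every `n ∈ ℕ`, every bounded local
`n`-cocycle `T : (Alg ℒ)ⁿ → X` is an `n`-cocycle. -/
theorem two_atom_lattice_local_cocycles_are_cocycles (H : Type*) [NormedAddCommGroup H]
    [InnerProductSpace ℂ H] [CompleteSpace H] [TopologicalSpace.SeparableSpace H]
    (M N : Submodule ℂ H) (hMc : IsClosed (M : Set H)) (hNc : IsClosed (N : Set H))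
    (hMN : M ⊓ N = ⊥) (hspan : (M ⊔ N).topologicalClosure = ⊤)
    (S : Subalgebra ℂ (H →L[ℂ] H))
    (hS : ∀ T : H →L[ℂ] H, T ∈ S ↔ (∀ x ∈ M, T x ∈ M) ∧ (∀ x ∈ N, T x ∈ N))
    (n : ℕ) (hn : 0 < n)
    (X : Type) (_ : NormedAddCommGroup X) (_ : NormedSpace ℂ X) (_ : CompleteSpace X)
    (B : BanachBimodule ↥S X)
    (T : MultilinearMap ℂ (fun _ : Fin n => ↥S) X)
    (hT : IsBoundedLocalCocycle B T) :
    IsBoundedCocycle B T := by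
  have h := IG_to_IdemGen (IG_two M N hMc hNc hMN hspan S hS)
  exact main_red (R := ↥S) (X := X) h B T hT
end
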